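/- arXiv:math/0701066 — 4 statements merged into one kernel-verified Lean document; each statement's English description precedes it below -/
import Mathlib

section
/- For nonnegative integers $a, b, k$ and $n \ge 1$, the constant term of $H(x_0,\ldots,x_n;a,b,k) := \prod_{l=1}^n (1-x_l/x_0)^a (1-x_0/x_l)^b \prod_{1\le i\ne j\le n}(1-x_i/x_j)^k$ equals $M_n(a,b,k) := \prod_{l=0}^{n-1} \frac{(a+b+kl)!\,(k(l+1))!}{(a+kl)!\,(b+kl)!\,k!}$. -/
/-!
Specialize `x₀` to a scalar `t`, and raise the exponents of the factors `t - x_i` from `a + b` to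
`a + b + 1` one index `i` at a time. The Euler operator `x_i ∂_i` multiplies the coefficient in
question by the exponent of `x_i`; on the other hand it produces the terms `k x_i / (x_i - x_j)`,
which are evaluated by antisymmetrizing under `x_i ↔ x_j`. Comparing the two gives Aomoto's
recursion, hence the dependence of the constant term on `a`. For `a = 0` only the Dyson product in
`x_1, …, x_n` is left, and it is the Morris product for `n - 1` and `a = b = k`, so induction on `n`
concludes.
-/

open MvPolynomial Finset

namespace Morris

section CoefficientExtraction

variable {σ R : Type*} [CommRing R]

lemma coeff_X_mul_pderiv (i : σ) (m : σ →₀ ℕ) (p : MvPolynomial σ R) :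
    coeff m (X i * pderiv i p) = m i * coeff m p := by
  classical
  rw [coeff_X_mul']
  split_ifs with hi
  · have hmi : 1 ≤ m i := Nat.one_le_iff_ne_zero.2 (Finsupp.mem_support_iff.1 hi)
    have hle : Finsupp.single i 1 ≤ m := by simpa using hmi
    rw [coeff_pderiv, tsub_add_cancel_of_le hle, mul_comm]
    simp [Nat.cast_sub hmi]
  · simp [Finsupp.notMem_support_iff.1 hi]

lemma coeff_rename_swap [DecidableEq σ] {i j : σ} {m : σ →₀ ℕ} (hm : m i = m j)
    (p : MvPolynomial σ R) : coeff m (rename (Equiv.swap i j) p) = coeff m p := by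
  have hswap : m.mapDomain (Equiv.swap i j) = m := by
    rw [← Finsupp.equivMapDomain_eq_mapDomain]
    ext l
    simp only [Finsupp.equivMapDomain_apply, Equiv.symm_swap, Equiv.swap_apply_def]
    grind
  conv_lhs => rw [← hswap]
  exact coeff_rename_mapDomain _ (Equiv.injective _) p m

lemma two_mul_coeff_mul_of_rename_swap_eq_neg [DecidableEq σ] {i j : σ} {m : σ →₀ ℕ}
    (hm : m i = m j) {g : MvPolynomial σ R} (hg : rename (Equiv.swap i j) g = -g)
    (f : MvPolynomial σ R) :
    2 * coeff m (f * g) = coeff m ((f - rename (Equiv.swap i j) f) * g) := by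
  have h := coeff_rename_swap hm (f * g)
  rw [map_mul, hg, mul_neg, coeff_neg] at h
  rw [sub_mul, coeff_sub]
  linear_combination -h

/-- The exponent vector all of whose entries are `d`. -/
noncomputable def constExp (ι : Type*) [Finite ι] (d : ℕ) : ι →₀ ℕ :=
  Finsupp.equivFunOnFinite.symm fun _ => d

@[simp]
lemma constExp_apply {ι : Type*} [Finite ι] (d : ℕ) (l : ι) : constExp ι d l = d :=
  rfl

lemma constExp_eq_cons (n d : ℕ) : constExp (Fin (n + 1)) d = (constExp (Fin n) d).cons d := by
  ext i
  cases i using Fin.cases <;> simp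

/-- The substitution moving the first variable of a polynomial into its coefficient ring. -/
noncomputable def firstVarToCoeff (n : ℕ) (R : Type*) [CommRing R] :
    MvPolynomial (Fin (n + 1)) R →ₐ[R] MvPolynomial (Fin n) (Polynomial R) :=
  aeval (Fin.cons (C Polynomial.X) X)

@[simp]
lemma firstVarToCoeff_X_zero (n : ℕ) : firstVarToCoeff n R (X 0) = C Polynomial.X := by
  simp [firstVarToCoeff]

@[simp]
lemma firstVarToCoeff_X_succ {n : ℕ} (l : Fin n) : firstVarToCoeff n R (X l.succ) = X l := by
  simp [firstVarToCoeff]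

lemma firstVarToCoeff_monomial {n : ℕ} (u : Fin (n + 1) →₀ ℕ) (c : R) :
    firstVarToCoeff n R (monomial u c) = monomial u.tail (Polynomial.monomial (u 0) c) := by
  rw [firstVarToCoeff, aeval_monomial, monomial_eq, Finsupp.prod_fintype _ _ (by simp),
    Finsupp.prod_fintype _ _ (by simp), Fin.prod_univ_succ, ← Polynomial.C_mul_X_pow_eq_monomial]
  simp [MvPolynomial.algebraMap_apply, Finsupp.tail_apply, mul_assoc]

lemma coeff_coeff_firstVarToCoeff {n : ℕ} (p : MvPolynomial (Fin (n + 1)) R) (m : Fin n →₀ ℕ)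
    (r : ℕ) : (coeff m (firstVarToCoeff n R p)).coeff r = coeff (m.cons r) p := by
  induction p using MvPolynomial.induction_on' with
  | add p q hp hq => simp only [map_add, coeff_add, Polynomial.coeff_add, hp, hq]
  | monomial u c =>
    have hcons : u = m.cons r ↔ u.tail = m ∧ u 0 = r := by
      refine ⟨fun h => by simp [h], ?_⟩
      rintro ⟨rfl, rfl⟩
      exact (Finsupp.cons_tail u).symm
    rw [firstVarToCoeff_monomial, coeff_monomial, coeff_monomial]
    by_cases h : u.tail = m <;> simp [h, hcons, Polynomial.coeff_monomial]

end CoefficientExtraction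

section DifferenceProduct

variable {ι : Type*}

@[to_additive]
lemma prod_univ_offDiag {M : Type*} [CommMonoid M] [Fintype ι] [DecidableEq ι] (f : ι × ι → M) :
    ∏ p ∈ univ.offDiag, f p = ∏ i, ∏ j ∈ univ.erase i, f (i, j) := by
  rw [prod_sigma']
  exact prod_nbij' (fun p => ⟨p.1, p.2⟩) (fun q => (q.1, q.2)) (by grind) (by grind) (by simp)
    (by simp) (by simp)

variable {R A B : Type*} [CommRing R] [CommRing A] [CommRing B] [Algebra R A]

lemma derivation_prod [DecidableEq ι] (δ : Derivation R A A) (f : ι → A) (s : Finset ι) :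
    δ (∏ l ∈ s, f l) = ∑ l ∈ s, (∏ i ∈ s.erase l, f i) * δ (f l) := by
  induction s using Finset.induction_on with
  | empty => simp
  | insert l s hl ih =>
    have herase : ∀ j ∈ s, (∏ i ∈ (insert l s).erase j, f i) * δ (f j) =
        f l * ((∏ i ∈ s.erase j, f i) * δ (f j)) := fun j hj => by
      rw [erase_insert_of_ne (by grind), prod_insert (by grind), mul_assoc]
    rw [prod_insert hl, Derivation.leibniz, ih, sum_insert hl, erase_insert hl,
      sum_congr rfl herase, ← mul_sum, smul_eq_mul, smul_eq_mul, add_comm]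

variable [Fintype ι]

/-- The product of the differences `v i - v j` over all ordered pairs `i ≠ j`, i.e. the discriminant
of the family `v` up to sign. -/
def diffProd (v : ι → A) : A :=
  ∏ p ∈ univ.offDiag, (v p.1 - v p.2)

lemma map_diffProd {F : Type*} [FunLike F A B] [RingHomClass F A B] (f : F) (v : ι → A) :
    f (diffProd v) = diffProd (fun l => f (v l)) := by
  simp [diffProd]

lemma diffProd_comp_perm (v : ι → A) (e : Equiv.Perm ι) :
    diffProd (fun l => v (e l)) = diffProd v :=
  prod_equiv (e.prodCongr e) (by simp) (by simp)

lemma rename_diffProd_X_pow (e : Equiv.Perm ι) (k : ℕ) :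
    rename e (diffProd X ^ k : MvPolynomial ι R) = diffProd X ^ k := by
  simp [map_diffProd, diffProd_comp_perm X e]

lemma diffProd_fin_succ {n : ℕ} (v : Fin (n + 1) → A) :
    diffProd v =
      (∏ l : Fin n, (v 0 - v l.succ) * (v l.succ - v 0)) *
        diffProd (fun l : Fin n => v l.succ) := by
  have prod_erase_eq_ite {m : ℕ} (f : Fin m → A) (i : Fin m) :
      ∏ j ∈ univ.erase i, f j = ∏ j, if j = i then 1 else f j := by
    rw [← prod_erase univ (a := i) (by simp)]
    exact prod_congr rfl fun j hj => (if_neg (ne_of_mem_erase hj)).symm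
  simp only [diffProd, prod_univ_offDiag, prod_erase_eq_ite]
  simp [Fin.prod_univ_succ, prod_mul_distrib, Fin.succ_ne_zero, (Fin.succ_ne_zero _).symm,
    mul_assoc]

variable [DecidableEq ι]

/-- The quotient of `diffProd v` by its factor `v i - v j`. -/
def diffProdErase (v : ι → A) (i j : ι) : A :=
  ∏ p ∈ univ.offDiag.erase (i, j), (v p.1 - v p.2)

lemma map_diffProdErase {F : Type*} [FunLike F A B] [RingHomClass F A B] (f : F) (v : ι → A)
    (i j : ι) : f (diffProdErase v i j) = diffProdErase (fun l => f (v l)) i j := by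
  simp [diffProdErase]

lemma diffProdErase_comp_perm (v : ι → A) (e : Equiv.Perm ι) (i j : ι) :
    diffProdErase (fun l => v (e l)) i j = diffProdErase v (e i) (e j) :=
  prod_equiv (e.prodCongr e) (by simp) (by simp)

lemma sub_mul_diffProdErase (v : ι → A) {i j : ι} (hij : i ≠ j) :
    (v i - v j) * diffProdErase v i j = diffProd v :=
  mul_prod_erase univ.offDiag (fun p => v p.1 - v p.2) (a := (i, j)) (by simpa using hij)

lemma diffProdErase_swap (v : ι → A) {i j : ι} (hij : i ≠ j) :
    diffProdErase v j i = -diffProdErase v i j := by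
  have hij_mem : (i, j) ∈ univ.offDiag.erase (j, i) := by simp [hij]
  have hji_mem : (j, i) ∈ univ.offDiag.erase (i, j) := by simp [hij.symm]
  rw [diffProdErase, diffProdErase, ← mul_prod_erase _ _ hij_mem, ← mul_prod_erase _ _ hji_mem,
    erase_right_comm]
  ring

lemma derivation_diffProd (δ : Derivation R A A) (v : ι → A) :
    δ (diffProd v) = 2 * ∑ i, ∑ j ∈ univ.erase i, diffProdErase v i j * δ (v i) := by
  have hreverse : ∑ p ∈ univ.offDiag, diffProdErase v p.1 p.2 * δ (v p.2) =
      -∑ p ∈ univ.offDiag, diffProdErase v p.1 p.2 * δ (v p.1) := by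
    rw [← sum_neg_distrib]
    refine sum_equiv (Equiv.prodComm ι ι) (by simp [eq_comm]) fun p hp => ?_
    rw [Equiv.prodComm_apply, Prod.fst_swap, Prod.snd_swap,
      diffProdErase_swap v (mem_offDiag.1 hp).2.2, neg_mul, neg_neg]
  calc δ (diffProd v)
      = ∑ p ∈ univ.offDiag, diffProdErase v p.1 p.2 * (δ (v p.1) - δ (v p.2)) := by
        simp only [diffProd, derivation_prod, diffProdErase, map_sub]
    _ = 2 * ∑ p ∈ univ.offDiag, diffProdErase v p.1 p.2 * δ (v p.1) := by
        simp only [mul_sub, sum_sub_distrib, hreverse]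
        ring
    _ = 2 * ∑ i, ∑ j ∈ univ.erase i, diffProdErase v i j * δ (v i) := by
        rw [sum_univ_offDiag]

/-- The quotient `k * diffProd v ^ k / (v i - v j)`: twice the sum of these over `j ≠ i` is the
derivative of `diffProd v ^ k` with respect to `v i`. -/
def diffProdPowQuot (v : ι → A) (k : ℕ) (i j : ι) : A :=
  k * diffProd v ^ (k - 1) * diffProdErase v i j

lemma sub_mul_diffProdPowQuot (v : ι → A) (k : ℕ) {i j : ι} (hij : i ≠ j) :
    (v i - v j) * diffProdPowQuot v k i j = k * diffProd v ^ k := by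
  rcases k with _ | k
  · simp [diffProdPowQuot]
  · rw [diffProdPowQuot, Nat.add_sub_cancel, pow_succ, ← sub_mul_diffProdErase v hij]
    ring

lemma rename_swap_diffProdPowQuot (k : ℕ) {i j : ι} (hij : i ≠ j) :
    rename (Equiv.swap i j) (diffProdPowQuot X k i j : MvPolynomial ι R) =
      -diffProdPowQuot X k i j := by
  have herase : rename (Equiv.swap i j) (diffProdErase X i j : MvPolynomial ι R) =
      -diffProdErase X i j := by
    have h := diffProdErase_comp_perm (X : ι → MvPolynomial ι R) (Equiv.swap i j) i j
    rw [Equiv.swap_apply_left, Equiv.swap_apply_right, diffProdErase_swap X hij] at h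
    simpa [map_diffProdErase] using h
  rw [diffProdPowQuot, map_mul, map_mul, rename_diffProd_X_pow, herase, map_natCast, mul_neg]

lemma pderiv_diffProd_X_pow (i : ι) (k : ℕ) :
    pderiv i (diffProd X ^ k : MvPolynomial ι R) =
      2 * ∑ j ∈ univ.erase i, diffProdPowQuot X k i j := by
  have hbase : pderiv i (diffProd X : MvPolynomial ι R) =
      2 * ∑ j ∈ univ.erase i, diffProdErase X i j := by
    rw [derivation_diffProd, sum_eq_single i (fun l _ hl => by simp [pderiv_X_of_ne hl]) (by simp)]
    simp
  simp only [pderiv_pow, hbase, diffProdPowQuot, ← mul_sum]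
  ring

end DifferenceProduct

section LinearProduct

variable {ι R : Type*} [CommRing R] [Fintype ι]

/-- The product of the powers `(t - X l) ^ e l` of linear factors, for a scalar `t`. -/
noncomputable def linearProd (t : R) (e : ι → ℕ) : MvPolynomial ι R :=
  ∏ l, (C t - X l) ^ e l

lemma rename_linearProd (t : R) (e : ι → ℕ) (f : Equiv.Perm ι) :
    rename f (linearProd t (e ∘ f)) = linearProd t e := by
  simpa [linearProd] using Equiv.prod_comp f fun l => (C t - X l : MvPolynomial ι R) ^ e l

variable [DecidableEq ι]

lemma linearProd_add_single (t : R) (e : ι → ℕ) (i : ι) :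
    linearProd t (e + Pi.single i 1) = (C t - X i) * linearProd t e := by
  simp only [linearProd, Pi.add_apply, pow_add, prod_mul_distrib, Pi.single_apply, pow_ite,
    pow_one, pow_zero, prod_ite_eq', mem_univ, if_true, mul_comm]

lemma pderiv_linearProd_add_single (t : R) (e : ι → ℕ) (i : ι) :
    pderiv i (linearProd t (e + Pi.single i 1)) = -((e i + 1 : ℕ) * linearProd t e) := by
  have hrest : ∏ l ∈ univ.erase i, (C t - X l : MvPolynomial ι R) ^ (e + Pi.single i 1 : ι → ℕ) l =
      ∏ l ∈ univ.erase i, (C t - X l) ^ e l :=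
    prod_congr rfl fun l hl => by simp [ne_of_mem_erase hl]
  rw [linearProd, derivation_prod, sum_eq_single i _ (by simp), hrest, linearProd,
    ← prod_erase_mul univ _ (mem_univ i)]
  · simp only [Pi.add_apply, Pi.single_eq_same, pderiv_pow, map_sub, pderiv_C, pderiv_X_self,
      Nat.add_sub_cancel]
    ring
  · intro l _ hl
    simp [pderiv_X_of_ne hl]

lemma rename_swap_linearProd (t : R) {e : ι → ℕ} {i j : ι} (h : e i = e j) :
    rename (Equiv.swap i j) (linearProd t e) = linearProd t e := by
  have he : e ∘ Equiv.swap i j = e := by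
    rw [Equiv.comp_swap_eq_update]
    grind
  simpa only [he] using rename_linearProd t e (Equiv.swap i j)

variable (t : R) {e : ι → ℕ} {m : ι →₀ ℕ} {i j : ι} {g : MvPolynomial ι R}

lemma two_mul_coeff_X_mul_linearProd_of_eq_succ (hij : i ≠ j) (he : e j = e i + 1)
    (hm : m i = m j) (hg : rename (Equiv.swap i j) g = -g) :
    2 * coeff m (X i * linearProd t (e + Pi.single i 1) * g) =
      coeff m (linearProd t (e + Pi.single i 1) * ((X i - X j) * g)) := by
  have hsymm : rename (Equiv.swap i j) (linearProd t (e + Pi.single i 1)) =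
      linearProd t (e + Pi.single i 1) :=
    rename_swap_linearProd t (by simp [hij.symm, he])
  rw [two_mul_coeff_mul_of_rename_swap_eq_neg hm hg, map_mul, rename_X, Equiv.swap_apply_left,
    hsymm]
  congr 1
  ring

lemma two_mul_coeff_X_mul_linearProd_of_eq (he : e i = e j)
    (hm : m i = m j) (hg : rename (Equiv.swap i j) g = -g) :
    2 * coeff m (X i * linearProd t (e + Pi.single i 1) * g) =
      2 * coeff m (linearProd t (e + Pi.single i 1) * ((X i - X j) * g)) -
        t * coeff m (linearProd t e * ((X i - X j) * g)) := by
  have hmove : rename (Equiv.swap i j) (linearProd t (e + Pi.single i 1)) =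
      linearProd t (e + Pi.single j 1) := by
    simp [linearProd_add_single, rename_swap_linearProd t he]
  have hcoeff : coeff m (linearProd t (e + Pi.single j 1) * ((X i - X j) * g)) =
      coeff m (linearProd t (e + Pi.single i 1) * ((X i - X j) * g)) := by
    rw [← coeff_rename_swap hm (linearProd t (e + Pi.single i 1) * _), map_mul, hmove]
    simp only [map_mul, map_sub, rename_X, Equiv.swap_apply_left, Equiv.swap_apply_right, hg]
    congr 1
    ring
  -- `x (t - x) - y (t - y) = (x - y) ((t - x) + (t - y) - t)`
  have hdiff : X i * linearProd t (e + Pi.single i 1) -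
      rename (Equiv.swap i j) (X i * linearProd t (e + Pi.single i 1)) =
      (X i - X j) * (linearProd t (e + Pi.single i 1) + linearProd t (e + Pi.single j 1) -
        C t * linearProd t e) := by
    rw [map_mul, rename_X, Equiv.swap_apply_left, hmove, linearProd_add_single,
      linearProd_add_single]
    ring
  calc 2 * coeff m (X i * linearProd t (e + Pi.single i 1) * g)
      = coeff m (linearProd t (e + Pi.single i 1) * ((X i - X j) * g) +
          linearProd t (e + Pi.single j 1) * ((X i - X j) * g) -
          C t * (linearProd t e * ((X i - X j) * g))) := by
        rw [two_mul_coeff_mul_of_rename_swap_eq_neg hm hg, hdiff]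
        congr 1
        ring
    _ = _ := by
        rw [coeff_sub, coeff_add, coeff_C_mul, hcoeff]
        ring

end LinearProduct

section AomotoRecursion

variable {ι R : Type*} [CommRing R] [Fintype ι] [DecidableEq ι] (t : R) (a b k : ℕ)

/-- Aomoto's deformation of the constant term: the coefficient relevant to the Morris identity once
the first variable is specialized to `t`, the exponent of `t - X l` being raised from `a + b` to
`a + b + 1` for `l ∈ S`. -/
noncomputable def aomotoCoeff (S : Finset ι) : R :=
  coeff (constExp ι (b + (Fintype.card ι - 1) * k))
    (linearProd t (fun l => a + b + if l ∈ S then 1 else 0) * diffProd X ^ k)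

variable {S : Finset ι} {i : ι}

lemma aomotoCoeff_insert_eq_coeff (hi : i ∉ S) :
    aomotoCoeff t a b k (insert i S) =
      coeff (constExp ι (b + (Fintype.card ι - 1) * k))
        (linearProd t ((fun l => a + b + if l ∈ S then 1 else 0) + Pi.single i 1) *
          diffProd X ^ k) := by
  rw [aomotoCoeff]
  congr 3
  ext l
  by_cases hl : l = i
  · simp [hl, hi]
  · simp [hl]

lemma two_mul_coeff_X_mul_diffProdPowQuot (hi : i ∉ S) {j : ι} (hij : i ≠ j) :
    2 * coeff (constExp ι (b + (Fintype.card ι - 1) * k))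
        (X i * linearProd t ((fun l => a + b + if l ∈ S then 1 else 0) + Pi.single i 1) *
          diffProdPowQuot X k i j) =
      if j ∈ S then k * aomotoCoeff t a b k (insert i S)
      else 2 * (k * aomotoCoeff t a b k (insert i S)) - t * (k * aomotoCoeff t a b k S) := by
  have hanti := rename_swap_diffProdPowQuot (R := R) k hij
  have hcoeff (p : MvPolynomial ι R) (m : ι →₀ ℕ) :
      coeff m (p * ((X i - X j) * diffProdPowQuot X k i j)) =
        (k : R) * coeff m (p * diffProd X ^ k) := by
    rw [sub_mul_diffProdPowQuot X k hij, mul_left_comm, ← map_natCast (C : R →+* MvPolynomial ι R),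
      coeff_C_mul]
  rw [aomotoCoeff_insert_eq_coeff t a b k hi, aomotoCoeff, ← hcoeff, ← hcoeff]
  split_ifs with hj
  · exact two_mul_coeff_X_mul_linearProd_of_eq_succ t hij (by simp [hi, hj]) rfl hanti
  · exact two_mul_coeff_X_mul_linearProd_of_eq t (by simp [hi, hj]) rfl hanti

lemma X_mul_pderiv_linearProd_mul_diffProd_pow (e : ι → ℕ) (i : ι) :
    X i * pderiv i (linearProd t (e + Pi.single i 1) * diffProd X ^ k) =
      C ((e i + 1 : ℕ) : R) * (linearProd t (e + Pi.single i 1) * diffProd X ^ k) -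
        C ((e i + 1 : ℕ) * t) * (linearProd t e * diffProd X ^ k) +
        2 * ∑ j ∈ univ.erase i,
          X i * linearProd t (e + Pi.single i 1) * diffProdPowQuot X k i j := by
  rw [pderiv_mul, pderiv_linearProd_add_single, pderiv_diffProd_X_pow, ← mul_sum,
    linearProd_add_single, C_mul, map_natCast]
  ring

lemma sum_erase_ite_mem (hi : i ∉ S) (x y : R) :
    ∑ j ∈ univ.erase i, (if j ∈ S then x else y) =
      (#S : ℕ) * x + (Fintype.card ι - 1 - #S : ℕ) * y := by
  have hS : S ⊆ univ.erase i := fun l hl => by grind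
  rw [sum_ite, filter_mem_eq_inter, inter_eq_right.2 hS, filter_notMem_eq_sdiff, sum_const,
    sum_const, card_sdiff_of_subset hS, card_erase_of_mem (mem_univ i), card_univ, nsmul_eq_mul,
    nsmul_eq_mul]

theorem aomotoCoeff_insert (hi : i ∉ S) :
    (a + 1 + k * (Fintype.card ι - 1 - #S) : ℕ) * aomotoCoeff t a b k (insert i S) =
      (a + b + 1 + k * (Fintype.card ι - 1 - #S) : ℕ) * (t * aomotoCoeff t a b k S) := by
  have hcard : #S + 1 ≤ Fintype.card ι := card_insert_of_notMem hi ▸ card_le_univ _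
  have heuler := coeff_X_mul_pderiv i (constExp ι (b + (Fintype.card ι - 1) * k))
    (linearProd t ((fun l => a + b + if l ∈ S then 1 else 0) + Pi.single i 1) *
      (diffProd X ^ k : MvPolynomial ι R))
  rw [X_mul_pderiv_linearProd_mul_diffProd_pow, coeff_add, coeff_sub, coeff_C_mul, coeff_C_mul,
    ← aomotoCoeff_insert_eq_coeff t a b k hi, ← aomotoCoeff, ← map_ofNat C, coeff_C_mul, coeff_sum,
    mul_sum, sum_congr rfl fun j hj =>
      two_mul_coeff_X_mul_diffProdPowQuot t a b k hi (ne_of_mem_erase hj).symm,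
    sum_erase_ite_mem hi, if_neg hi, constExp_apply] at heuler
  obtain ⟨r, hr⟩ := Nat.exists_eq_add_of_le hcard
  rw [hr, show #S + 1 + r - 1 = #S + r by omega, Nat.add_sub_cancel_left] at heuler ⊢
  push_cast at heuler ⊢
  linear_combination heuler

theorem prod_mul_aomotoCoeff (S : Finset ι) :
    (∏ r ∈ range #S, (a + 1 + k * (Fintype.card ι - 1 - r) : ℕ)) * aomotoCoeff t a b k S =
      (∏ r ∈ range #S, (a + b + 1 + k * (Fintype.card ι - 1 - r) : ℕ)) *
        (t ^ #S * aomotoCoeff t a b k (∅ : Finset ι)) := by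
  induction S using Finset.induction_on with
  | empty => simp
  | insert i S hi ih =>
    have hstep := aomotoCoeff_insert t a b k hi
    rw [card_insert_of_notMem hi, prod_range_succ, prod_range_succ, pow_succ]
    push_cast at ih hstep ⊢
    linear_combination (∏ r ∈ range #S, (a + 1 + k * ((Fintype.card ι - 1 - r : ℕ) : R))) * hstep +
      (a + b + 1 + k * ((Fintype.card ι - 1 - #S : ℕ) : R)) * t * ih

end AomotoRecursion

section MorrisCoefficient

variable {ι R : Type*} [CommRing R] [Fintype ι]

/-- The Laurent polynomial `H` of the Morris identity with denominators cleared and the variable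
`x₀` specialized to the scalar `t`. -/
noncomputable def morrisPoly (t : R) (a b k : ℕ) : MvPolynomial ι R :=
  (∏ l, (C t - X l) ^ a * (X l - C t) ^ b) * diffProd X ^ k

/-- The coefficient of `morrisPoly` that corresponds to the constant term of `H`. -/
noncomputable def morrisCoeff (ι : Type*) [Fintype ι] (t : R) (a b k : ℕ) : R :=
  coeff (constExp ι (b + (Fintype.card ι - 1) * k)) (morrisPoly t a b k)

lemma morrisPoly_eq_linearProd (t : R) (a b k : ℕ) :
    (morrisPoly t a b k : MvPolynomial ι R) =
      C (((-1) ^ b) ^ Fintype.card ι) * (linearProd t (fun _ => a + b) * diffProd X ^ k) := by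
  have hfactor (l : ι) : (C t - X l : MvPolynomial ι R) ^ a * (X l - C t) ^ b =
      (-1) ^ b * (C t - X l) ^ (a + b) := by
    rw [← neg_sub (C t) (X l), neg_pow (C t - X l) b]
    ring
  simp [morrisPoly, linearProd, hfactor, prod_mul_distrib, mul_assoc]

theorem prod_mul_morrisCoeff_succ (t : R) (a b k : ℕ) :
    (∏ l ∈ range (Fintype.card ι), (a + 1 + k * l : ℕ)) * morrisCoeff ι t (a + 1) b k =
      (∏ l ∈ range (Fintype.card ι), (a + b + 1 + k * l : ℕ)) *
        (t ^ Fintype.card ι * morrisCoeff ι t a b k) := by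
  classical
  have h := prod_mul_aomotoCoeff t a b k (univ : Finset ι)
  rw [card_univ, prod_range_reflect (fun l => a + 1 + k * l),
    prod_range_reflect (fun l => a + b + 1 + k * l)] at h
  simp only [aomotoCoeff, mem_univ, if_true, notMem_empty, if_false, add_zero] at h
  rw [morrisCoeff, morrisCoeff, morrisPoly_eq_linearProd, morrisPoly_eq_linearProd, coeff_C_mul,
    coeff_C_mul, add_right_comm]
  linear_combination ((-1) ^ b) ^ Fintype.card ι * h

lemma morrisCoeff_zero_zero (b k : ℕ) :
    morrisCoeff ι (0 : R) 0 b k =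
      coeff (constExp ι ((Fintype.card ι - 1) * k)) (diffProd X ^ k : MvPolynomial ι R) := by
  have hmonomial : ∏ l, (X l : MvPolynomial ι R) ^ b = monomial (constExp ι b) 1 := by
    simp [monomial_eq, Finsupp.prod_fintype]
  have hexp : constExp ι (b + (Fintype.card ι - 1) * k) =
      constExp ι b + constExp ι ((Fintype.card ι - 1) * k) := by
    ext
    simp
  simp [morrisCoeff, morrisPoly, hmonomial, hexp, coeff_monomial_mul]

lemma map_morrisCoeff {S : Type*} [CommRing S] (f : R →+* S) (t : R) (a b k : ℕ) :
    f (morrisCoeff ι t a b k) = morrisCoeff ι (f t) a b k := by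
  rw [morrisCoeff, ← coeff_map]
  simp [morrisCoeff, morrisPoly, map_diffProd]

lemma coeff_eq_coeff_morrisCoeff (n a b k m : ℕ) :
    coeff ((constExp (Fin n) (b + (n - 1) * k)).cons m)
        ((∏ l : Fin n, (X 0 - X l.succ) ^ a * (X l.succ - X 0) ^ b) *
          diffProd (fun l : Fin n => (X l.succ : MvPolynomial (Fin (n + 1)) R)) ^ k) =
      (morrisCoeff (Fin n) (Polynomial.X : Polynomial R) a b k).coeff m := by
  rw [← coeff_coeff_firstVarToCoeff]
  simp [morrisCoeff, morrisPoly, map_diffProd]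

lemma coeff_diffProd_fin_succ_pow (n k : ℕ) :
    coeff (constExp (Fin (n + 1)) (n * k)) (diffProd X ^ k : MvPolynomial (Fin (n + 1)) R) =
      (morrisCoeff (Fin n) (Polynomial.X : Polynomial R) k k k).coeff (n * k) := by
  have hexp : constExp (Fin n) (n * k) = constExp (Fin n) (k + (n - 1) * k) := by
    ext l
    obtain ⟨n, rfl⟩ := Nat.exists_eq_succ_of_ne_zero l.pos.ne'
    rw [constExp_apply, constExp_apply, Nat.succ_eq_add_one, Nat.add_sub_cancel]
    ring
  rw [← coeff_eq_coeff_morrisCoeff, constExp_eq_cons, hexp, diffProd_fin_succ, mul_pow, ← prod_pow]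
  simp only [mul_pow]

end MorrisCoefficient

section MorrisProduct

variable (K : Type*) [Field K]

/-- The product `M_n(a, b, k)` of the Morris identity. -/
def morrisProduct (n a b k : ℕ) : K :=
  ∏ l ∈ range n, ((a + b + k * l).factorial * (k * (l + 1)).factorial : K) /
    ((a + k * l).factorial * (b + k * l).factorial * k.factorial)

variable [CharZero K]

lemma prod_mul_morrisProduct_succ (n a b k : ℕ) :
    (∏ l ∈ range n, (a + 1 + k * l : ℕ)) * morrisProduct K n (a + 1) b k =
      (∏ l ∈ range n, (a + b + 1 + k * l : ℕ)) * morrisProduct K n a b k := by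
  simp only [morrisProduct, Nat.cast_prod, ← prod_mul_distrib]
  refine prod_congr rfl fun l _ => ?_
  have hnum : a + 1 + b + k * l = (a + b + k * l) + 1 := by ring
  have hden : a + 1 + k * l = (a + k * l) + 1 := by ring
  have hnum' : a + b + 1 + k * l = (a + b + k * l) + 1 := by ring
  have hfactorial (m : ℕ) : (m.factorial : K) ≠ 0 := mod_cast m.factorial_ne_zero
  have hden_ne : ((a + k * l + 1 : ℕ) : K) ≠ 0 := Nat.cast_ne_zero.2 (Nat.succ_ne_zero _)
  rw [hnum, hden, hnum', Nat.factorial_succ, Nat.factorial_succ, Nat.cast_mul, Nat.cast_mul]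
  field_simp [hfactorial]

lemma morrisProduct_succ_zero (n b k : ℕ) :
    morrisProduct K (n + 1) 0 b k = morrisProduct K n k k k := by
  have hfactorial (m : ℕ) : (m.factorial : K) ≠ 0 := mod_cast m.factorial_ne_zero
  rw [morrisProduct, prod_range_succ', morrisProduct]
  simp only [mul_zero, add_zero, zero_add, mul_one, Nat.factorial_zero, Nat.cast_one, one_mul]
  rw [div_self (mul_ne_zero (hfactorial b) (hfactorial k)), mul_one]
  refine prod_congr rfl fun l _ => ?_
  rw [show k + k + k * l = k * (l + 1 + 1) by ring, show k + k * l = k * (l + 1) by ring]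
  field_simp [hfactorial]

theorem coeff_morrisCoeff_eq_morrisProduct (n a b k : ℕ) :
    (morrisCoeff (Fin n) (Polynomial.X : Polynomial K) a b k).coeff (n * a) =
      morrisProduct K n a b k := by
  induction n generalizing a b with
  | zero =>
    have hexp : constExp (Fin 0) b = 0 := Subsingleton.elim _ _
    simp [morrisCoeff, morrisPoly, morrisProduct, diffProd, hexp]
  | succ n ih =>
    induction a with
    | zero =>
      rw [mul_zero, Polynomial.coeff_zero_eq_eval_zero, ← Polynomial.coe_evalRingHom,
        map_morrisCoeff, Polynomial.coe_evalRingHom, Polynomial.eval_X, morrisCoeff_zero_zero,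
        Fintype.card_fin, Nat.add_sub_cancel, coeff_diffProd_fin_succ_pow, ih,
        morrisProduct_succ_zero]
    | succ a iha =>
      have hstep := congrArg (Polynomial.coeff · ((n + 1) * (a + 1)))
        (prod_mul_morrisCoeff_succ (ι := Fin (n + 1)) (Polynomial.X : Polynomial K) a b k)
      simp only [Fintype.card_fin, ← Polynomial.C_eq_natCast, Polynomial.coeff_C_mul, mul_add_one,
        Polynomial.coeff_X_pow_mul] at hstep
      rw [iha, ← prod_mul_morrisProduct_succ] at hstep
      refine mul_left_cancel₀ ?_ hstep
      exact Nat.cast_ne_zero.2 (prod_ne_zero_iff.2 fun l _ => by omega)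

end MorrisProduct

end Morris

theorem morris_identity_general {K : Type*} [Field K] [CharZero K] (n a b k : ℕ) :
    MvPolynomial.coeff
      (Finsupp.equivFunOnFinite.symm
        (Fin.cons (n * a) (fun _ : Fin n => b + (n - 1) * k)))
      ((∏ l : Fin n,
          (X (0 : Fin (n + 1)) - X l.succ : MvPolynomial (Fin (n + 1)) K) ^ a *
            (X l.succ - X (0 : Fin (n + 1))) ^ b) *
        ∏ j : Fin n, ∏ i ∈ Finset.univ.erase j,
          (X j.succ - X i.succ : MvPolynomial (Fin (n + 1)) K) ^ k)
      = ∏ l ∈ Finset.range n,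
          (((a + b + k * l).factorial * (k * (l + 1)).factorial : K) /
            ((a + k * l).factorial * (b + k * l).factorial * k.factorial)) := by
  have hexp : Finsupp.equivFunOnFinite.symm
      (Fin.cons (n * a) (fun _ : Fin n => b + (n - 1) * k) : Fin (n + 1) → ℕ) =
        (Morris.constExp (Fin n) (b + (n - 1) * k)).cons (n * a) := by
    ext i
    cases i using Fin.cases <;> simp
  have hdiff : ∏ j : Fin n, ∏ i ∈ univ.erase j,
      (X j.succ - X i.succ : MvPolynomial (Fin (n + 1)) K) ^ k =
        Morris.diffProd (fun l : Fin n => X l.succ) ^ k := by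
    rw [Morris.diffProd, ← prod_pow, Morris.prod_univ_offDiag]
  rw [hexp, hdiff, Morris.coeff_eq_coeff_morrisCoeff]
  exact Morris.coeff_morrisCoeff_eq_morrisProduct K n a b k

/-- **Morris's constant term identity.** The constant term of
`H(x_0,…,x_n;a,b,k) = ∏_{l=1}^n (1-x_l/x_0)^a (1-x_0/x_l)^b ∏_{1≤i≠j≤n} (1-x_i/x_j)^k`
equals `M_n(a,b,k) = ∏_{l=0}^{n-1} (a+b+kl)! (k(l+1))! / ((a+kl)! (b+kl)! k!)`.
Clearing denominators, the constant term equals the coefficient of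
`x_0^(n*a) ∏_{l=1}^n x_l^(b + (n-1)k)` in
`∏_{l=1}^n (x_0 - x_l)^a (x_l - x_0)^b ∏_{1≤i≠j≤n} (x_j - x_i)^k`. -/
theorem morris_identity (n a b k : ℕ) (hn : 1 ≤ n) :
    MvPolynomial.coeff
      (Finsupp.equivFunOnFinite.symm
        (Fin.cons (n * a) (fun _ : Fin n => b + (n - 1) * k)))
      ((∏ l : Fin n,
          (X (0 : Fin (n + 1)) - X l.succ : MvPolynomial (Fin (n + 1)) ℚ) ^ a *
            (X l.succ - X (0 : Fin (n + 1))) ^ b) *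
        ∏ j : Fin n, ∏ i ∈ Finset.univ.erase j,
          (X j.succ - X i.succ : MvPolynomial (Fin (n + 1)) ℚ) ^ k)
      = ∏ l ∈ Finset.range n,
          (((a + b + k * l).factorial * (k * (l + 1)).factorial : ℚ) /
            ((a + k * l).factorial * (b + k * l).factorial * k.factorial)) :=
  morris_identity_general n a b k
end

section
/- For nonnegative integers $a,b,k$, $n\ge 1$, and $0\le m\le n$, the constant term of $A_m(x_0,\ldots,x_n;a,b,k) := \prod_{l=1}^n (1-x_l/x_0)^{\chi(l\le m)} \cdot H(x_0,\ldots,x_n;a,b,k)$ equals $\prod_{l=0}^{n-1} \frac{[a+b+kl+\chi(l\ge n-m)]!\,(k(l+1))!}{[a+kl+\chi(l\ge n-m)]!\,(b+kl)!\,k!}$. -/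
open MvPolynomial Finset

/-!
Write `F_m` for the polynomial at `m`, so that `F_{m+1} = (x_0 - x_s) F_m` for the new index `s`,
and compare coefficients at the exponent `d` of the constant term at `m + 1` in the Euler
derivative `x_s ∂F_{m+1}/∂x_s`. On the one hand this gives `d_s` times the coefficient of
`F_{m+1}`; on the other hand, the logarithmic derivative produces the terms
`(x_s + x_j)/(x_s - x_j) F_{m+1}`. If `j ≤ m`, then `F_{m+1}` is symmetric in `x_s` and `x_j`, so
the term is antisymmetric and its coefficient vanishes because `d_s = d_j`; if `j > m`, then `F_m`
is symmetric, and antisymmetry turns the coefficient into minus that of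
`x_s F_m = x_0 F_m - F_{m+1}`. Hence passing from `m` to `m + 1` multiplies the constant term by
`(a + b + 1 + k (n - 1 - m)) / (a + 1 + k (n - 1 - m))`.

Since `m = n` amounts to `m = 0` with `a + 1` in place of `a`, only `a = m = 0` is left. There one
may set `x_0 = 0`, and Dyson's product in `n` variables remains. Singling out one of these
variables makes it the case of `n - 1` variables with `m = 0` and `a = b = k`.
-/

namespace Aomoto

variable {R σ : Type*}

section Coefficients

theorem coeff_X_mul_pderiv [CommSemiring R] (s : σ) (d : σ →₀ ℕ) (P : MvPolynomial σ R) :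
    coeff d (X s * pderiv s P) = d s * coeff d P := by
  classical
  induction P using MvPolynomial.induction_on' with
  | monomial u c =>
    rw [X_mul_pderiv_monomial, coeff_smul, coeff_monomial, nsmul_eq_mul]
    split_ifs with h
    · rw [h]
    · simp only [mul_zero]
  | add P Q hP hQ => simp only [map_add, mul_add, coeff_add, hP, hQ]

theorem derivation_prod {A ι : Type*} [CommSemiring R] [CommSemiring A] [Algebra R A]
    [DecidableEq ι] (D : Derivation R A A) (t : Finset ι) (f : ι → A) :
    D (∏ i ∈ t, f i) = ∑ i ∈ t, (∏ l ∈ t.erase i, f l) * D (f i) := by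
  induction t using Finset.induction_on with
  | empty => simp
  | insert i t hi ih =>
    have herase : ∀ j ∈ t, (insert i t).erase j = insert i (t.erase j) := fun j hj =>
      erase_insert_of_ne (ne_of_mem_of_not_mem hj hi).symm
    rw [prod_insert hi, D.leibniz, sum_insert hi, erase_insert hi, ih, add_comm, smul_eq_mul,
      smul_eq_mul, mul_sum]
    congr 1
    refine sum_congr rfl fun j hj => ?_
    rw [herase j hj, prod_insert (fun h => hi (mem_of_mem_erase h)), mul_assoc]

theorem coeff_eq_of_sModEq_span_X [CommRing R] {z : σ} {d : σ →₀ ℕ} (hd : d z = 0)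
    {P Q : MvPolynomial σ R} (h : P ≡ Q [SMOD Ideal.span {(X z : MvPolynomial σ R)}]) :
    coeff d P = coeff d Q := by
  classical
  obtain ⟨T, hT⟩ := Ideal.mem_span_singleton.mp (SModEq.sub_mem.mp h)
  rw [← sub_eq_zero, ← coeff_sub, hT, coeff_X_mul', if_neg (by simp [hd])]

end Coefficients

section Antisymmetry

variable [DecidableEq σ]

theorem map_swap_of_mem_iff {s j : σ} {I : Finset σ} (h : s ∈ I ↔ j ∈ I) :
    I.map (Equiv.swap s j).toEmbedding = I := by
  ext i
  rw [mem_map_equiv, Equiv.symm_swap, Equiv.swap_apply_def]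
  split_ifs with his hij
  · rw [his, h]
  · rw [hij, h]
  · rfl

theorem coeff_rename_swap [CommSemiring R] {s j : σ} {d : σ →₀ ℕ} (hd : d s = d j)
    (P : MvPolynomial σ R) : coeff d (rename (Equiv.swap s j) P) = coeff d P := by
  have hmap : d.mapDomain (Equiv.swap s j) = d := by
    ext i
    rw [Finsupp.mapDomain_equiv_apply, Equiv.symm_swap, Equiv.swap_apply_def]
    split_ifs with his hij
    · rw [his, hd]
    · rw [hij, hd]
    · rfl
  conv_lhs => rw [← hmap]
  exact coeff_rename_mapDomain _ (Equiv.injective _) P d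

variable [CommRing R] [IsDomain R]

theorem coeff_eq_zero_of_rename_swap_eq_neg [CharZero R] {s j : σ} {d : σ →₀ ℕ} (hd : d s = d j)
    {P : MvPolynomial σ R} (hP : rename (Equiv.swap s j) P = -P) : coeff d P = 0 :=
  CharZero.eq_neg_self_iff.mp <| by
    rw [← coeff_neg, ← hP, coeff_rename_swap hd]

theorem rename_swap_eq_neg_of_X_sub_X_mul_eq {s j : σ} (hsj : s ≠ j) {P Q : MvPolynomial σ R}
    (hP : rename (Equiv.swap s j) P = P) (hQ : (X s - X j) * Q = P) :
    rename (Equiv.swap s j) Q = -Q := by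
  have hne : (X j - X s : MvPolynomial σ R) ≠ 0 :=
    sub_ne_zero.mpr fun h => hsj (X_injective h).symm
  refine mul_left_cancel₀ hne ?_
  have hswap := congrArg (rename (Equiv.swap s j)) hQ
  simp only [map_mul, map_sub, rename_X, Equiv.swap_apply_left, Equiv.swap_apply_right] at hswap
  rw [hswap, hP, ← hQ]
  ring

variable [CharZero R]

theorem coeff_X_add_X_mul_eq_zero {s j : σ} (hsj : s ≠ j) {d : σ →₀ ℕ} (hd : d s = d j)
    {P Q : MvPolynomial σ R} (hP : rename (Equiv.swap s j) P = P) (hQ : (X s - X j) * Q = P) :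
    coeff d ((X s + X j) * Q) = 0 := by
  refine coeff_eq_zero_of_rename_swap_eq_neg hd ?_
  simp only [map_mul, map_add, rename_X, Equiv.swap_apply_left, Equiv.swap_apply_right,
    rename_swap_eq_neg_of_X_sub_X_mul_eq hsj hP hQ]
  ring

theorem coeff_X_add_X_mul_X_sub_X_mul {z s j : σ} (hzs : z ≠ s) (hzj : z ≠ j) (hsj : s ≠ j)
    {d : σ →₀ ℕ} (hd : d s = d j) {P Q : MvPolynomial σ R}
    (hP : rename (Equiv.swap s j) P = P) (hQ : (X s - X j) * Q = P) :
    coeff d ((X s + X j) * ((X z - X s) * Q)) = -coeff d (X s * P) := by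
  have hsum : (X s + X j) * ((X z - X s) * Q) + X s * P
      = (X z * (X s + X j) - 2 * X s * X j) * Q := by
    rw [← hQ]
    ring
  rw [eq_neg_iff_add_eq_zero, ← coeff_add, hsum]
  refine coeff_eq_zero_of_rename_swap_eq_neg hd ?_
  simp only [map_mul, map_add, map_sub, map_ofNat, rename_X, Equiv.swap_apply_left,
    Equiv.swap_apply_right, Equiv.swap_apply_of_ne_of_ne hzs hzj,
    rename_swap_eq_neg_of_X_sub_X_mul_eq hsj hP hQ]
  ring

end Antisymmetry

section Polynomial

/-- The factor `(x_i - x_j)^p (x_j - x_i)^q` coupling two variables: up to a monomial this is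
`(1 - x_j/x_i)^p (1 - x_i/x_j)^q`. -/
noncomputable def pairFactor (R : Type*) [CommRing R] (i j : σ) (p q : ℕ) : MvPolynomial σ R :=
  (X i - X j) ^ p * (X j - X i) ^ q

/-- Dyson's product `∏_{i ≠ j} (1 - x_i/x_j)^k` over the variables indexed by `I`, cleared of
denominators. -/
noncomputable def dysonProd [DecidableEq σ] (R : Type*) [CommRing R] (I : Finset σ) (k : ℕ) :
    MvPolynomial σ R :=
  ∏ j ∈ I, ∏ i ∈ I.erase j, (X j - X i) ^ k

/-- Aomoto's Laurent polynomial cleared of denominators, with `x_0` at the index `z`, the other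
variables at the indices in `I`, and an arbitrary set `S` of indices in place of `{1, …, m}`. -/
noncomputable def aomotoPoly [DecidableEq σ] (R : Type*) [CommRing R] (z : σ) (I S : Finset σ)
    (a b k : ℕ) : MvPolynomial σ R :=
  (∏ l ∈ S, (X z - X l)) * (∏ l ∈ I, pairFactor R z l a b) * dysonProd R I k

theorem X_sub_X_mul_pderiv_pairFactor [CommRing R] {s t : σ} (hts : t ≠ s) (p q : ℕ) :
    (X s - X t) * pderiv s (pairFactor R s t p q) = (p + q) • pairFactor R s t p q := by
  have hfactor : pairFactor R s t p q = C ((-1) ^ q) * (X s - X t) ^ (p + q) := by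
    rw [pairFactor, ← neg_sub (X s) (X t), neg_pow (X s - X t) q, pow_add]
    simp only [map_pow, map_neg, map_one]
    ring
  rw [hfactor, pderiv_C_mul, pderiv_pow, map_sub, pderiv_X_self, pderiv_X_of_ne hts]
  rcases Nat.eq_zero_or_pos (p + q) with h | h
  · simp [h]
  · rw [← mul_pow_sub_one h.ne' (X s - X t)]
    simp only [nsmul_eq_mul]
    ring

variable [DecidableEq σ]

section CommRing

variable [CommRing R]

theorem dysonProd_insert {s : σ} {J : Finset σ} (hs : s ∉ J) (k : ℕ) :
    dysonProd R (insert s J) k = (∏ j ∈ J, pairFactor R s j k k) * dysonProd R J k := by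
  have hrow : ∀ j ∈ J, ∏ i ∈ (insert s J).erase j, (X j - X i : MvPolynomial σ R) ^ k
      = (X j - X s) ^ k * ∏ i ∈ J.erase j, (X j - X i) ^ k := fun j hj => by
    rw [erase_insert_of_ne (ne_of_mem_of_not_mem hj hs).symm,
      prod_insert fun h => hs (mem_of_mem_erase h)]
  simp only [dysonProd, pairFactor]
  rw [prod_insert hs, erase_insert hs, prod_congr rfl hrow, prod_mul_distrib, prod_mul_distrib,
    mul_assoc]

theorem aomotoPoly_insert {z s : σ} {J : Finset σ} (hs : s ∉ J) (S : Finset σ) (a b k : ℕ) :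
    aomotoPoly R z (insert s J) S a b k
      = aomotoPoly R z J S a b k * pairFactor R s z b a * ∏ j ∈ J, pairFactor R s j k k := by
  rw [aomotoPoly, aomotoPoly, prod_insert hs, dysonProd_insert hs,
    show pairFactor R z s a b = pairFactor R s z b a from mul_comm _ _]
  ring

theorem X_sub_X_mul_aomotoPoly {s : σ} {S : Finset σ} (hs : s ∉ S) (z : σ) (I : Finset σ)
    (a b k : ℕ) :
    (X z - X s) * aomotoPoly R z I S a b k = aomotoPoly R z I (insert s S) a b k := by
  simp only [aomotoPoly, prod_insert hs, mul_assoc]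

theorem aomotoPoly_self (z : σ) (I : Finset σ) (a b k : ℕ) :
    aomotoPoly R z I I a b k = aomotoPoly R z I ∅ (a + 1) b k := by
  simp only [aomotoPoly, pairFactor, prod_empty, one_mul, ← prod_mul_distrib, pow_succ',
    mul_assoc]

theorem aomotoPoly_zero_sModEq {z s : σ} {J : Finset σ} (hs : s ∉ J) (b k : ℕ) :
    aomotoPoly R z (insert s J) ∅ 0 b k ≡
      monomial (∑ l ∈ insert s J, Finsupp.single l b) 1 * aomotoPoly R s J ∅ k k k
      [SMOD Ideal.span {(X z : MvPolynomial σ R)}] := by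
  have hfactor (l : σ) : pairFactor R z l 0 b ≡ monomial (Finsupp.single l b) 1
      [SMOD Ideal.span {(X z : MvPolynomial σ R)}] := by
    rw [pairFactor, pow_zero, one_mul, ← X_pow_eq_monomial]
    refine SModEq.pow b (SModEq.sub_mem.mpr ?_)
    rw [sub_sub_cancel_left, neg_mem_iff]
    exact Ideal.mem_span_singleton_self _
  simp only [aomotoPoly, prod_empty, one_mul, ← dysonProd_insert hs, monomial_sum_one]
  exact (SModEq.prod fun l _ => hfactor l).mul SModEq.rfl

theorem aomotoPoly_map {τ : Type*} [DecidableEq τ] (f : σ ↪ τ)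
    (z : τ) (I S : Finset σ) (a b k : ℕ) :
    aomotoPoly R z (I.map f) (S.map f) a b k
      = (∏ l ∈ S, (X z - X (f l))) * (∏ l ∈ I, (X z - X (f l)) ^ a * (X (f l) - X z) ^ b) *
        ∏ j ∈ I, ∏ i ∈ I.erase j, (X (f j) - X (f i)) ^ k := by
  simp only [aomotoPoly, pairFactor, dysonProd, prod_map, ← map_erase]

theorem rename_aomotoPoly {τ : Type*} [DecidableEq τ] (f : σ ↪ τ) (z : σ) (I S : Finset σ)
    (a b k : ℕ) :
    rename f (aomotoPoly R z I S a b k) = aomotoPoly R (f z) (I.map f) (S.map f) a b k := by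
  simp only [aomotoPoly, pairFactor, dysonProd, map_mul, map_prod, map_pow, map_sub, rename_X,
    prod_map, ← map_erase]

theorem rename_swap_aomotoPoly {z s j : σ} (hzs : z ≠ s) (hzj : z ≠ j) {I S : Finset σ}
    (hI : s ∈ I ↔ j ∈ I) (hS : s ∈ S ↔ j ∈ S) (a b k : ℕ) :
    rename (Equiv.swap s j) (aomotoPoly R z I S a b k) = aomotoPoly R z I S a b k := by
  have h := rename_aomotoPoly (R := R) (Equiv.swap s j).toEmbedding z I S a b k
  rwa [map_swap_of_mem_iff hI, map_swap_of_mem_iff hS, Equiv.coe_toEmbedding,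
    Equiv.swap_apply_of_ne_of_ne hzs hzj] at h

theorem pderiv_aomotoPoly_eq_zero [Nontrivial R] {z s : σ} {J S : Finset σ} (hzs : z ≠ s)
    (hs : s ∉ J) (hS : S ⊆ J) (a b k : ℕ) : pderiv s (aomotoPoly R z J S a b k) = 0 := by
  have hX {i : σ} (hi : i ∈ insert z J) : (X i : MvPolynomial σ R) ∈ supported R {s}ᶜ :=
    X_mem_supported.mpr <| by
      rintro rfl
      exact (mem_insert.mp hi).elim (fun h => hzs h.symm) hs
  have hsub {i j : σ} (hi : i ∈ insert z J) (hj : j ∈ insert z J) :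
      (X i - X j : MvPolynomial σ R) ∈ supported R {s}ᶜ := sub_mem (hX hi) (hX hj)
  have hz := mem_insert_self z J
  have hJ {i : σ} (hi : i ∈ J) : i ∈ insert z J := mem_insert_of_mem hi
  have hmem : aomotoPoly R z J S a b k ∈ supported R {s}ᶜ :=
    mul_mem
      (mul_mem (prod_mem fun l hl => hsub hz (hJ (hS hl))) <| prod_mem fun l hl =>
        mul_mem (pow_mem (hsub hz (hJ hl)) a) (pow_mem (hsub (hJ hl) hz) b))
      (prod_mem fun j hj => prod_mem fun i hi =>
        pow_mem (hsub (hJ hj) (hJ (mem_of_mem_erase hi))) k)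
  exact pderiv_eq_zero_of_notMem_vars fun h => mem_supported.mp hmem h rfl

theorem exists_X_sub_X_mul_pderiv_aomotoPoly [Nontrivial R] {z s : σ} {J S : Finset σ}
    (hzs : z ≠ s) (hs : s ∉ J) (hS : S ⊆ J) (a b k : ℕ) :
    ∃ Q : σ → MvPolynomial σ R,
      (∀ j ∈ J, (X s - X j) * Q j = (2 * k) • aomotoPoly R z (insert s J) S a b k) ∧
      (X s - X z) * pderiv s (aomotoPoly R z (insert s J) S a b k)
        = (a + b) • aomotoPoly R z (insert s J) S a b k + (X s - X z) * ∑ j ∈ J, Q j := by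
  rw [aomotoPoly_insert hs]
  set A := aomotoPoly R z J S a b k
  set w := pairFactor R s z b a
  set g : σ → MvPolynomial σ R := fun j => pairFactor R s j k k
  refine ⟨fun j => A * w * ((∏ l ∈ J.erase j, g l) * pderiv s (g j)), fun j hj => ?_, ?_⟩
  · have hg : (X s - X j) * pderiv s (g j) = (k + k) • g j :=
      X_sub_X_mul_pderiv_pairFactor (ne_of_mem_of_not_mem hj hs) k k
    rw [nsmul_eq_mul] at hg ⊢
    rw [← mul_prod_erase J g hj]
    push_cast at hg ⊢
    linear_combination A * w * (∏ l ∈ J.erase j, g l) * hg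
  · have hA : pderiv s A = 0 := pderiv_aomotoPoly_eq_zero hzs hs hS a b k
    have hw : (X s - X z) * pderiv s w = (b + a) • w := X_sub_X_mul_pderiv_pairFactor hzs b a
    rw [← mul_sum, pderiv_mul, pderiv_mul, hA, derivation_prod]
    rw [nsmul_eq_mul] at hw ⊢
    push_cast at hw ⊢
    linear_combination A * (∏ j ∈ J, g j) * hw

end CommRing

section Recursion

variable [CommRing R]

theorem exists_two_mul_X_mul_pderiv_aomotoPoly_insert [Nontrivial R] {z s : σ} {J S : Finset σ}
    (hzs : z ≠ s) (hs : s ∉ J) (hS : S ⊆ J) (a b k : ℕ) :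
    ∃ Q : σ → MvPolynomial σ R,
      (∀ j ∈ J, (X s - X j) * Q j = (2 * k) • aomotoPoly R z (insert s J) S a b k) ∧
      2 * (X s * pderiv s (aomotoPoly R z (insert s J) (insert s S) a b k))
        = (#J * (2 * k)) • aomotoPoly R z (insert s J) (insert s S) a b k
          + ∑ j ∈ J, (X s + X j) * ((X z - X s) * Q j)
          - (2 * (a + b + 1)) • (X s * aomotoPoly R z (insert s J) S a b k) := by
  obtain ⟨Q, hQ, hderiv⟩ :=
    exists_X_sub_X_mul_pderiv_aomotoPoly (R := R) hzs hs hS a b k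
  refine ⟨Q, hQ, ?_⟩
  rw [← X_sub_X_mul_aomotoPoly fun h => hs (hS h)]
  set F := aomotoPoly R z (insert s J) S a b k
  have hconst : (#J * (2 * k)) • ((X z - X s) * F)
      = ∑ j ∈ J, (X z - X s) * ((X s - X j) * Q j) := by
    rw [sum_congr rfl fun j hj => by rw [hQ j hj], sum_const, mul_smul_comm, mul_smul]
  -- `2 x_s = (x_s - x_j) + (x_s + x_j)` in every summand of the logarithmic derivative.
  have hsum : 2 * (X s * ((X z - X s) * ∑ j ∈ J, Q j))
      = (#J * (2 * k)) • ((X z - X s) * F) + ∑ j ∈ J, (X s + X j) * ((X z - X s) * Q j) := by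
    rw [hconst, mul_sum, mul_sum, mul_sum, ← sum_add_distrib]
    exact sum_congr rfl fun j _ => by ring
  rw [← hsum, pderiv_mul, map_sub, pderiv_X_of_ne hzs, pderiv_X_self]
  simp only [nsmul_eq_mul] at hderiv ⊢
  push_cast at hderiv ⊢
  linear_combination (-2 * X s) * hderiv

variable [IsDomain R] [CharZero R]

theorem coeff_X_add_X_mul_of_X_sub_X_mul_eq_nsmul {z s j : σ} {J S : Finset σ} (hzs : z ≠ s)
    (hzJ : z ∉ J) (hs : s ∉ J) (hS : S ⊆ J) (hj : j ∈ J) {d : σ →₀ ℕ} (hd : d s = d j)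
    {a b k c : ℕ} {Q : MvPolynomial σ R}
    (hQ : (X s - X j) * Q = c • aomotoPoly R z (insert s J) S a b k) :
    coeff d ((X s + X j) * ((X z - X s) * Q))
      = if j ∈ S then 0 else -(c : R) * coeff d (X s * aomotoPoly R z (insert s J) S a b k) := by
  have hsS : s ∉ S := fun h => hs (hS h)
  have hsj : s ≠ j := (ne_of_mem_of_not_mem hj hs).symm
  have hzj : z ≠ j := (ne_of_mem_of_not_mem hj hzJ).symm
  have hI : s ∈ insert s J ↔ j ∈ insert s J := by simp [hj]
  split_ifs with hjS
  · have hsymm : rename (Equiv.swap s j) (c • aomotoPoly R z (insert s J) (insert s S) a b k)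
        = c • aomotoPoly R z (insert s J) (insert s S) a b k := by
      rw [map_nsmul, rename_swap_aomotoPoly hzs hzj hI (by simp [hjS])]
    refine coeff_X_add_X_mul_eq_zero hsj hd hsymm ?_
    rw [mul_left_comm, hQ, mul_smul_comm, X_sub_X_mul_aomotoPoly hsS]
  · have hsymm : rename (Equiv.swap s j) (c • aomotoPoly R z (insert s J) S a b k)
        = c • aomotoPoly R z (insert s J) S a b k := by
      rw [map_nsmul, rename_swap_aomotoPoly hzs hzj hI (by simp [hjS, hsS])]
    rw [coeff_X_add_X_mul_X_sub_X_mul hzs hzj hsj hd hsymm hQ, mul_smul_comm, coeff_smul,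
      nsmul_eq_mul, neg_mul]

theorem coeff_aomotoPoly_insert {z s : σ} {J S : Finset σ} (hzs : z ≠ s) (hzJ : z ∉ J)
    (hs : s ∉ J) (hS : S ⊆ J) (a b k : ℕ) {d : σ →₀ ℕ} (hd : ∀ i ∈ insert s J, d i = b + #J * k) :
    (a + 1 + k * (#J - #S) : R) * coeff d (aomotoPoly R z (insert s J) (insert s S) a b k)
      = (a + b + 1 + k * (#J - #S)) * coeff d (X z * aomotoPoly R z (insert s J) S a b k) := by
  obtain ⟨Q, hQ, heuler⟩ :=
    exists_two_mul_X_mul_pderiv_aomotoPoly_insert (R := R) hzs hs hS a b k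
  set F := aomotoPoly R z (insert s J) S a b k with hF
  set G := aomotoPoly R z (insert s J) (insert s S) a b k with hG
  have hG_coeff : coeff d G = coeff d (X z * F) - coeff d (X s * F) := by
    rw [hG, ← X_sub_X_mul_aomotoPoly fun h => hs (hS h), ← coeff_sub, sub_mul]
  have hterms : ∑ j ∈ J, coeff d ((X s + X j) * ((X z - X s) * Q j))
      = -((#J - #S : R) * (2 * k * coeff d (X s * F))) := by
    rw [sum_congr rfl fun j hj => coeff_X_add_X_mul_of_X_sub_X_mul_eq_nsmul hzs hzJ hs hS hj
      ((hd s (mem_insert_self s J)).trans (hd j (mem_insert_of_mem hj)).symm) (hQ j hj),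
      ← hF, sum_ite, sum_const_zero, zero_add, sum_const, filter_notMem_eq_sdiff,
      card_sdiff_of_subset hS, nsmul_eq_mul, Nat.cast_sub (card_le_card hS)]
    push_cast
    ring
  have hcoeff := congrArg (coeff d) heuler
  simp only [two_mul (X s * _), coeff_add, coeff_sub, coeff_sum, coeff_smul, hterms,
    coeff_X_mul_pderiv, hd s (mem_insert_self s J)] at hcoeff
  simp only [nsmul_eq_mul] at hcoeff
  push_cast at hcoeff
  refine mul_left_cancel₀ (two_ne_zero (α := R)) ?_
  linear_combination 2 * (a + b + 1 + k * (#J - #S) : R) * hG_coeff - hcoeff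

end Recursion

end Polynomial

section Constant

variable (K : Type*) [Field K]

/-- The `l`-th factor of the constant term in Morris's identity, which is Aomoto's for `m = 0`. -/
def morrisFactor (a b k l : ℕ) : K :=
  ((a + b + k * l).factorial * (k * (l + 1)).factorial : K) /
    ((a + k * l).factorial * (b + k * l).factorial * k.factorial)

/-- The constant term in Aomoto's identity: in Morris's product the last `m` of the `n` factors
have `a` replaced by `a + 1`. -/
def aomotoConstant (n a b k m : ℕ) : K :=
  ∏ l ∈ range n, morrisFactor K (a + if n - m ≤ l then 1 else 0) b k l

theorem aomotoConstant_self (n a b k : ℕ) :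
    aomotoConstant K n a b k n = aomotoConstant K n (a + 1) b k 0 :=
  prod_congr rfl fun l hl => by
    rw [if_pos (by lia), if_neg (by have := mem_range.mp hl; lia), add_zero]

variable [CharZero K]

theorem mul_morrisFactor_succ (a b k l : ℕ) :
    (a + k * l + 1) * morrisFactor K (a + 1) b k l
      = (a + b + k * l + 1) * morrisFactor K a b k l := by
  have hne : (a + k * l + 1 : K) ≠ 0 := by exact_mod_cast Nat.succ_ne_zero (a + k * l)
  have hfact (N : ℕ) : (N.factorial : K) ≠ 0 := Nat.cast_ne_zero.mpr N.factorial_ne_zero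
  rw [morrisFactor, morrisFactor, show a + 1 + b + k * l = a + b + k * l + 1 by ring,
    show a + 1 + k * l = a + k * l + 1 by ring, Nat.factorial_succ, Nat.factorial_succ]
  have := hfact (a + k * l)
  have := hfact (b + k * l)
  have := hfact k
  push_cast
  field_simp

theorem morrisFactor_zero_zero (b k : ℕ) : morrisFactor K 0 b k 0 = 1 := by
  simp [morrisFactor, div_self, Nat.factorial_ne_zero]

theorem morrisFactor_zero_succ (b k l : ℕ) :
    morrisFactor K 0 b k (l + 1) = morrisFactor K k k k l := by
  have hfact (N : ℕ) : (N.factorial : K) ≠ 0 := Nat.cast_ne_zero.mpr N.factorial_ne_zero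
  have := hfact (b + k * (l + 1))
  have := hfact (k * (l + 1))
  have := hfact k
  rw [morrisFactor, morrisFactor, show k + k + k * l = k * (l + 1 + 1) by ring,
    show k + k * l = k * (l + 1) by ring, zero_add, zero_add]
  field_simp

theorem aomotoConstant_zero_left (n b k : ℕ) :
    aomotoConstant K (n + 1) 0 b k 0 = aomotoConstant K n k k k 0 := by
  rw [aomotoConstant, aomotoConstant, prod_range_succ', if_neg (by lia), add_zero,
    morrisFactor_zero_zero, mul_one]
  refine prod_congr rfl fun l hl => ?_
  have hl := mem_range.mp hl
  rw [if_neg (by lia), if_neg (by lia), add_zero, add_zero, morrisFactor_zero_succ]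

theorem mul_aomotoConstant_succ {n m : ℕ} (hm : m ≤ n) (a b k : ℕ) :
    (a + 1 + k * (n - m) : K) * aomotoConstant K (n + 1) a b k (m + 1)
      = (a + b + 1 + k * (n - m)) * aomotoConstant K (n + 1) a b k m := by
  have hmem : n - m ∈ range (n + 1) := mem_range.mpr (by lia)
  have hothers : ∏ l ∈ (range (n + 1)).erase (n - m),
        morrisFactor K (a + if n + 1 - (m + 1) ≤ l then 1 else 0) b k l
      = ∏ l ∈ (range (n + 1)).erase (n - m),
        morrisFactor K (a + if n + 1 - m ≤ l then 1 else 0) b k l :=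
    prod_congr rfl fun l hl => by
      have hne := ne_of_mem_erase hl
      rw [if_congr (show n + 1 - (m + 1) ≤ l ↔ n + 1 - m ≤ l by lia) rfl rfl]
  have hfactor := mul_morrisFactor_succ K a b k (n - m)
  rw [Nat.cast_sub hm] at hfactor
  rw [aomotoConstant, aomotoConstant, ← mul_prod_erase _ _ hmem, ← mul_prod_erase _ _ hmem,
    hothers, if_pos (by lia), if_neg (by lia), add_zero]
  linear_combination (∏ l ∈ (range (n + 1)).erase (n - m),
    morrisFactor K (a + if n + 1 - m ≤ l then 1 else 0) b k l) * hfactor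

end Constant

section ConstantTerm

/-- The exponent of `x_0^p ∏_{l=1}^n x_l^q`, with the indices as in `aomotoPoly`. -/
noncomputable def aomotoExponent (z : σ) (I : Finset σ) (p q : ℕ) : σ →₀ ℕ :=
  Finsupp.single z p + ∑ i ∈ I, Finsupp.single i q

theorem aomotoExponent_apply_left {z : σ} {I : Finset σ} (hz : z ∉ I) (p q : ℕ) :
    aomotoExponent z I p q z = p := by
  classical
  simp [aomotoExponent, Finsupp.single_apply, hz]

theorem aomotoExponent_apply_of_mem {z i : σ} {I : Finset σ} (hz : z ∉ I) (hi : i ∈ I) (p q : ℕ) :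
    aomotoExponent z I p q i = q := by
  classical
  simp [aomotoExponent, Finsupp.single_apply, hi,
    (ne_of_mem_of_not_mem hi hz).symm]

theorem aomotoExponent_succ (z : σ) (I : Finset σ) (p q : ℕ) :
    aomotoExponent z I (p + 1) q = Finsupp.single z 1 + aomotoExponent z I p q := by
  rw [aomotoExponent, add_comm p, Finsupp.single_add, add_assoc, aomotoExponent]

theorem aomotoExponent_succEmb (n p q : ℕ) :
    aomotoExponent (0 : Fin (n + 1)) (univ.map (Fin.succEmb n)) p q
      = Finsupp.equivFunOnFinite.symm (Fin.cons p fun _ : Fin n => q) := by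
  have hz : (0 : Fin (n + 1)) ∉ univ.map (Fin.succEmb n) := by simp
  ext i
  refine Fin.cases ?_ (fun j => ?_) i
  · rw [aomotoExponent_apply_left hz]
    simp
  · rw [aomotoExponent_apply_of_mem hz (by simp)]
    simp

variable [DecidableEq σ]

theorem aomotoExponent_zero_insert {s : σ} {J : Finset σ} (hs : s ∉ J) (z : σ) (q r : ℕ) :
    aomotoExponent z (insert s J) 0 (q + r)
      = ∑ i ∈ insert s J, Finsupp.single i q + aomotoExponent s J r r := by
  rw [aomotoExponent, aomotoExponent, Finsupp.single_zero, zero_add,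
    ← sum_insert (f := fun i => Finsupp.single i r) hs, ← sum_add_distrib]
  simp only [Finsupp.single_add]

section CommRing

variable [CommRing R]

/-- The constant term of Aomoto's Laurent polynomial, as a coefficient of `aomotoPoly`. For `I = ∅`
the truncated subtraction does no harm, since no variable carries that exponent. -/
noncomputable def aomotoCT (R : Type*) [CommRing R] (z : σ) (I S : Finset σ) (a b k : ℕ) : R :=
  coeff (aomotoExponent z I (#I * a + #S) (b + (#I - 1) * k)) (aomotoPoly R z I S a b k)

theorem aomotoCT_empty (z : σ) (a b k : ℕ) : aomotoCT R z ∅ ∅ a b k = 1 := by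
  simp [aomotoCT, aomotoExponent, aomotoPoly, dysonProd]

theorem aomotoCT_self (z : σ) (I : Finset σ) (a b k : ℕ) :
    aomotoCT R z I I a b k = aomotoCT R z I ∅ (a + 1) b k := by
  rw [aomotoCT, aomotoCT, aomotoPoly_self, card_empty, add_zero, mul_add_one]

-- For `a = 0` the exponent of `x_z` is `0`, so we may set `x_z = 0`; Dyson's product that remains
-- is again of Aomoto's form, with `x_s` as the distinguished variable.
theorem aomotoCT_zero_left {z s : σ} {J : Finset σ} (hz : z ∉ insert s J) (hs : s ∉ J)
    (b k : ℕ) : aomotoCT R z (insert s J) ∅ 0 b k = aomotoCT R s J ∅ k k k := by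
  have hexp : aomotoExponent s J (#J * k) (#J * k)
      = aomotoExponent s J (#J * k) (k + (#J - 1) * k) := by
    simp only [aomotoExponent]
    congr 1
    refine sum_congr rfl fun i hi => ?_
    rw [← one_add_mul, add_tsub_cancel_of_le (card_pos.mpr ⟨i, hi⟩)]
  rw [aomotoCT, aomotoCT, card_empty, mul_zero, add_zero, add_zero, card_insert_of_notMem hs,
    Nat.add_sub_cancel, coeff_eq_of_sModEq_span_X (aomotoExponent_apply_left hz _ _)
      (aomotoPoly_zero_sModEq hs b k), aomotoExponent_zero_insert hs, coeff_monomial_mul, one_mul,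
    hexp]

theorem mul_aomotoCT_insert [IsDomain R] [CharZero R] {z s : σ} {J S : Finset σ}
    (hz : z ∉ insert s J) (hs : s ∉ J) (hS : S ⊆ J) (a b k : ℕ) :
    (a + 1 + k * (#J - #S) : R) * aomotoCT R z (insert s J) (insert s S) a b k
      = (a + b + 1 + k * (#J - #S)) * aomotoCT R z (insert s J) S a b k := by
  have hzs : z ≠ s := fun h => hz (h ▸ mem_insert_self s J)
  have hzJ : z ∉ J := fun h => hz (mem_insert_of_mem h)
  rw [aomotoCT, aomotoCT, card_insert_of_notMem fun h => hs (hS h), ← add_assoc,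
    card_insert_of_notMem hs, Nat.add_sub_cancel,
    coeff_aomotoPoly_insert hzs hzJ hs hS a b k fun i hi =>
      aomotoExponent_apply_of_mem hz hi _ _, aomotoExponent_succ, coeff_X_mul]

end CommRing

variable {K : Type*} [Field K] [CharZero K]

theorem aomotoCT_eq_aomotoConstant_of_empty {z : σ} {I : Finset σ} (hz : z ∉ I) {a b k : ℕ}
    (h : aomotoCT K z I ∅ a b k = aomotoConstant K #I a b k 0) {S : Finset σ} (hS : S ⊆ I) :
    aomotoCT K z I S a b k = aomotoConstant K #I a b k #S := by
  induction S using Finset.induction_on with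
  | empty => exact h
  | insert s S hsS ih =>
    obtain ⟨hsI, hSI⟩ := insert_subset_iff.mp hS
    obtain ⟨J, hs, rfl⟩ : ∃ J, s ∉ J ∧ insert s J = I :=
      ⟨I.erase s, notMem_erase s I, insert_erase hsI⟩
    have hSJ : S ⊆ J := (subset_insert_iff_of_notMem hsS).mp hSI
    have hcard : #S ≤ #J := card_le_card hSJ
    have hne : (a + 1 + k * (#J - #S) : K) ≠ 0 := by
      rw [← Nat.cast_sub hcard]
      exact_mod_cast (by lia : a + 1 + k * (#J - #S) ≠ 0)
    refine mul_left_cancel₀ hne ?_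
    rw [mul_aomotoCT_insert hz hs hSJ, ih hSI, card_insert_of_notMem hs,
      card_insert_of_notMem hsS, mul_aomotoConstant_succ K hcard]

theorem aomotoCT_empty_eq_aomotoConstant {z : σ} {I : Finset σ} (hz : z ∉ I) {b k : ℕ}
    (h : aomotoCT K z I ∅ 0 b k = aomotoConstant K #I 0 b k 0) (a : ℕ) :
    aomotoCT K z I ∅ a b k = aomotoConstant K #I a b k 0 := by
  induction a with
  | zero => exact h
  | succ a ih =>
    rw [← aomotoCT_self, ← aomotoConstant_self,
      aomotoCT_eq_aomotoConstant_of_empty hz ih Subset.rfl]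

theorem aomotoCT_eq_aomotoConstant {z : σ} {I S : Finset σ} (hz : z ∉ I) (hS : S ⊆ I)
    (a b k : ℕ) : aomotoCT K z I S a b k = aomotoConstant K #I a b k #S := by
  induction I using Finset.induction_on generalizing z S a b with
  | empty => rw [subset_empty.mp hS, aomotoCT_empty]; rfl
  | insert s J hs ih =>
    refine aomotoCT_eq_aomotoConstant_of_empty hz (aomotoCT_empty_eq_aomotoConstant hz ?_ a) hS
    rw [aomotoCT_zero_left hz hs, ih hs (empty_subset J), card_empty, card_insert_of_notMem hs,
      aomotoConstant_zero_left]

end ConstantTerm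

end Aomoto

open Aomoto in
theorem aomoto_identity_general (K : Type*) [Field K] [CharZero K] {n : ℕ} (S : Finset (Fin n))
    (a b k : ℕ) :
    coeff (Finsupp.equivFunOnFinite.symm
        (Fin.cons (n * a + #S) (fun _ : Fin n => b + (n - 1) * k)))
      ((∏ l ∈ S, (X (0 : Fin (n + 1)) - X l.succ : MvPolynomial (Fin (n + 1)) K)) *
        (∏ l : Fin n, (X 0 - X l.succ) ^ a * (X l.succ - X 0) ^ b) *
        ∏ j : Fin n, ∏ i ∈ univ.erase j, (X j.succ - X i.succ) ^ k)
      = ∏ l ∈ range n,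
          ((a + b + k * l + (if n - #S ≤ l then 1 else 0)).factorial *
              (k * (l + 1)).factorial : K) /
            ((a + k * l + (if n - #S ≤ l then 1 else 0)).factorial *
              (b + k * l).factorial * k.factorial) := by
  have hCT := aomotoCT_eq_aomotoConstant (K := K) (z := 0) (I := univ.map (Fin.succEmb n))
    (by simp) (map_subset_map.mpr (subset_univ S)) a b k
  rw [aomotoCT, aomotoPoly_map, card_map, card_map, card_fin, aomotoExponent_succEmb] at hCT
  refine hCT.trans (prod_congr rfl fun l _ => ?_)
  simp only [morrisFactor, add_right_comm a, add_right_comm (a + b)]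

/-- **Aomoto's constant term identity.** The constant term of
`A_m(x_0,…,x_n;a,b,k) = ∏_{l=1}^n (1-x_l/x_0)^(χ(l≤m)) · H(x_0,…,x_n;a,b,k)`
equals `∏_{l=0}^{n-1} (a+b+kl+χ(l≥n-m))! (k(l+1))! / ((a+kl+χ(l≥n-m))! (b+kl)! k!)`.
Clearing denominators, the constant term equals the coefficient of
`x_0^(n*a + m) ∏_{l=1}^n x_l^(b + (n-1)k)` in
`∏_{l=1}^n (x_0 - x_l)^(χ(l≤m)) · ∏_{l=1}^n (x_0 - x_l)^a (x_l - x_0)^b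
  · ∏_{1≤i≠j≤n} (x_j - x_i)^k`. -/
theorem aomoto_identity (n a b k m : ℕ) (hn : 1 ≤ n) (hm : m ≤ n) :
    MvPolynomial.coeff
      (Finsupp.equivFunOnFinite.symm
        (Fin.cons (n * a + m) (fun _ : Fin n => b + (n - 1) * k)))
      ((∏ l : Fin n,
          (if (l : ℕ) < m then
            (X (0 : Fin (n + 1)) - X l.succ : MvPolynomial (Fin (n + 1)) ℚ) else 1)) *
        (∏ l : Fin n,
          (X (0 : Fin (n + 1)) - X l.succ : MvPolynomial (Fin (n + 1)) ℚ) ^ a *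
            (X l.succ - X (0 : Fin (n + 1))) ^ b) *
        ∏ j : Fin n, ∏ i ∈ Finset.univ.erase j,
          (X j.succ - X i.succ : MvPolynomial (Fin (n + 1)) ℚ) ^ k)
      = ∏ l ∈ Finset.range n,
          (((a + b + k * l + (if n - m ≤ l then 1 else 0)).factorial *
              (k * (l + 1)).factorial : ℚ) /
            ((a + k * l + (if n - m ≤ l then 1 else 0)).factorial *
              (b + k * l).factorial * k.factorial)) := by
  simpa [prod_filter, Fin.card_filter_val_lt, hm] using
    aomoto_identity_general ℚ {l : Fin n | (l : ℕ) < m} a b k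
end

section
/- For any Laurent polynomial $L(x_0,\ldots,x_n)$ independent of $a_0,\ldots,a_n$, there exists a rational function $R(a_0,\ldots,a_n)$ in $n+1$ variables over $\mathbb{Q}$ such that for all nonnegative integers $a_0,\ldots,a_n$ at which $R$ is defined, $\mathrm{CT}_x\, L(x_0,\ldots,x_n)\prod_{0\le i\ne j\le n}(1-x_i/x_j)^{a_j} = R(a_0,\ldots,a_n)\cdot\frac{(a_0+\cdots+a_n)!}{a_0!\,a_1!\cdots a_n!}$. -/
open MvPolynomial Finset

/-!
Divide the constant term by the multinomial coefficient and induct on the number of variables. Fix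
`a_1, …, a_n`, put `A = a_1 + ⋯ + a_n`, and regard the constant term as a function of `t = a_0`: it
is a polynomial of degree at most `A + O(1)`. Dyson's product is homogeneous, so `x_0` may be set to
`1`, and it is invariant up to sign under `x_j ↦ 1 - x_j`. After this substitution one reads off
that the polynomial vanishes at `t = -h` for `1 ≤ h ≤ A`, except when `h` exceeds some subset sum of
`a_1, …, a_n` by at most a constant. Multiplying by the corresponding linear forms
`t + ∑ j ∈ U, a_j + i` makes it divisible by `(t + 1) ⋯ (t + A)`, with a quotient whose degree in
`t` is bounded independently of `a_1, …, a_n`. By Lagrange interpolation this quotient is determined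
by boundedly many slices `t = k`, and expanding `∏_j (1 - x_j) ^ (a_j + k)` from its top-degree term
shows that every slice is a finite combination of constant terms in one variable fewer.
-/

namespace Dyson

section RationalFunctions

variable {σ τ K : Type*} [Field K]

variable (σ K) in
/-- The admissible denominators: products of linear forms `a_{i₁} + ⋯ + a_{iₘ} + j` in distinct
variables, with `m ≥ 1` and `j` a positive integer. -/
noncomputable def linearFormProducts : Submonoid (MvPolynomial σ K) :=
  Submonoid.closure
    {q | ∃ (U : Finset σ) (j : ℕ), U.Nonempty ∧ q = ∑ i ∈ U, X i + C ((j : K) + 1)}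

lemma eval_natCast_ne_zero [CharZero K] {q : MvPolynomial σ K} (hq : q ∈ linearFormProducts σ K)
    (a : σ → ℕ) : eval (fun i => (a i : K)) q ≠ 0 := by
  induction hq using Submonoid.closure_induction with
  | mem q hq =>
    obtain ⟨U, j, -, rfl⟩ := hq
    simp only [map_add, map_sum, eval_X, eval_C]
    exact_mod_cast (Nat.succ_ne_zero (∑ i ∈ U, a i + j))
  | one => simp
  | mul q r _ _ hq hr => simpa using ⟨hq, hr⟩

lemma rename_mem_linearFormProducts (e : σ ↪ τ) {q : MvPolynomial σ K}
    (hq : q ∈ linearFormProducts σ K) : rename e q ∈ linearFormProducts τ K := by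
  induction hq using Submonoid.closure_induction with
  | mem q hq =>
    obtain ⟨U, j, hU, rfl⟩ := hq
    exact Submonoid.subset_closure ⟨U.map e, j, hU.map, by simp⟩
  | one => simp
  | mul q r _ _ hq hr => simpa using mul_mem hq hr

variable [CharZero K]

variable (σ K) in
/-- The functions of `a : σ → ℕ` of the form `a ↦ p(a) / q(a)`, where the denominator `q` is a
product of admissible linear forms and therefore never vanishes at `a`. -/
def rationalFunctions : Subalgebra K ((σ → ℕ) → K) where
  carrier := {f | ∃ p, ∃ q ∈ linearFormProducts σ K,
    ∀ a, f a = eval (fun i => (a i : K)) p / eval (fun i => (a i : K)) q}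
  mul_mem' := by
    rintro f g ⟨p, q, hq, hf⟩ ⟨r, s, hs, hg⟩
    exact ⟨p * r, q * s, mul_mem hq hs, fun a => by simp [hf, hg, div_mul_div_comm]⟩
  add_mem' := by
    rintro f g ⟨p, q, hq, hf⟩ ⟨r, s, hs, hg⟩
    refine ⟨p * s + q * r, q * s, mul_mem hq hs, fun a => ?_⟩
    simp [hf, hg, div_add_div _ _ (eval_natCast_ne_zero hq a) (eval_natCast_ne_zero hs a)]
  algebraMap_mem' c := ⟨C c, 1, one_mem _, fun a => by simp⟩

lemma polynomial_eval_mem_rationalFunctions (f : Polynomial K) (i : σ) :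
    (fun a => f.eval (a i : K)) ∈ rationalFunctions σ K :=
  ⟨Polynomial.aeval (X i) f, 1, one_mem _, fun a => by
    induction f using Polynomial.induction_on' <;> simp_all⟩

lemma natCast_mem_rationalFunctions (i : σ) :
    (fun a => (a i : K)) ∈ rationalFunctions σ K := by
  simpa using polynomial_eval_mem_rationalFunctions (K := K) Polynomial.X i

lemma linearForm_inv_mem_rationalFunctions (U : Finset σ) (j : ℕ) :
    (fun a => (∑ i ∈ U, (a i : K) + (j + 1))⁻¹) ∈ rationalFunctions σ K := by
  rcases U.eq_empty_or_nonempty with rfl | hU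
  · simp only [sum_empty, zero_add]
    exact (rationalFunctions σ K).algebraMap_mem (j + 1 : K)⁻¹
  · exact ⟨1, ∑ i ∈ U, X i + C ((j : K) + 1), Submonoid.subset_closure ⟨U, j, hU, rfl⟩,
      fun a => by simp only [map_one, map_add, map_sum, eval_X, eval_C, one_div]⟩

lemma comp_mem_rationalFunctions (e : σ ↪ τ) {f : (σ → ℕ) → K}
    (hf : f ∈ rationalFunctions σ K) : (fun a => f (a ∘ e)) ∈ rationalFunctions τ K := by
  obtain ⟨p, q, hq, h⟩ := hf
  refine ⟨rename e p, rename e q, rename_mem_linearFormProducts e hq, fun a => ?_⟩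
  simp only [h, eval_rename]
  rfl

lemma mem_rationalFunctions_of_slices {n M : ℕ} {g : (Fin (n + 1) → ℕ) → K}
    (hslice : ∀ k : ℕ, (fun b => g (Fin.cons k b)) ∈ rationalFunctions (Fin n) K)
    (hpoly : ∀ b, ∃ Q : Polynomial K, Q.natDegree ≤ M ∧
      ∀ t : ℕ, g (Fin.cons t b) = Q.eval (t : K)) :
    g ∈ rationalFunctions (Fin (n + 1)) K := by
  let ℓ (k : ℕ) : Polynomial K := Lagrange.basis (range (M + 1)) (fun i : ℕ => (i : K)) k
  have interpolation : g = ∑ k ∈ range (M + 1),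
      (fun a => (ℓ k).eval (a 0 : K)) * fun a => g (Fin.cons k (a ∘ Fin.succEmb n)) := by
    ext a
    obtain ⟨Q, hdeg, hQ⟩ := hpoly (Fin.tail a)
    have hQ_eq := Lagrange.eq_interpolate (s := range (M + 1)) (v := fun i : ℕ => (i : K))
      (f := Q) Nat.cast_injective.injOn (by
        rw [card_range]
        exact Polynomial.degree_le_natDegree.trans_lt (by exact_mod_cast Nat.lt_succ_of_le hdeg))
    calc g a = Q.eval (a 0 : K) := by rw [← hQ, Fin.cons_self_tail]
      _ = ∑ k ∈ range (M + 1), (ℓ k).eval (a 0 : K) * Q.eval (k : K) := by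
        conv_lhs => rw [hQ_eq]
        simp [ℓ, Lagrange.interpolate_apply, Polynomial.eval_finsetSum, mul_comm]
      _ = _ := by simp [← hQ, Fin.tail_def, Function.comp_def]
  rw [interpolation]
  exact sum_mem fun k _ => mul_mem (polynomial_eval_mem_rationalFunctions _ 0)
    (comp_mem_rationalFunctions (Fin.succEmb n) (hslice k))

end RationalFunctions

section IntCoeff

variable {σ R : Type*} [Finite σ] [CommSemiring R]

open Classical in
/-- The coefficient of the Laurent monomial `∏ j, x_j ^ m j` in a polynomial; it is zero as soon
as some exponent `m j` is negative. -/
noncomputable def intCoeff (m : σ → ℤ) : MvPolynomial σ R →ₗ[R] R :=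
  if 0 ≤ m then lcoeff R (Finsupp.equivFunOnFinite.symm fun j => (m j).toNat) else 0

lemma intCoeff_natCast (p : σ →₀ ℕ) (f : MvPolynomial σ R) :
    intCoeff (fun j => (p j : ℤ)) f = coeff p f := by
  have hp : (0 : σ → ℤ) ≤ fun j => (p j : ℤ) := fun j => by simp
  rw [intCoeff, if_pos hp]
  simp [lcoeff]

lemma intCoeff_of_neg {m : σ → ℤ} {j : σ} (hj : m j < 0) (f : MvPolynomial σ R) :
    intCoeff m f = 0 := by
  rw [intCoeff, if_neg fun h => (h j).not_gt hj, LinearMap.zero_apply]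

lemma exists_eq_natCast_or_exists_neg (m : σ → ℤ) :
    (∃ p : σ →₀ ℕ, m = fun j => (p j : ℤ)) ∨ ∃ j, m j < 0 := by
  by_cases h : ∃ j, m j < 0
  · exact .inr h
  · push Not at h
    exact .inl ⟨Finsupp.equivFunOnFinite.symm fun j => (m j).toNat, by ext j; simp [h j]⟩

lemma intCoeff_monomial_mul (m : σ → ℤ) (p : σ →₀ ℕ) (r : R) (f : MvPolynomial σ R) :
    intCoeff m (monomial p r * f) = r * intCoeff (fun j => m j - p j) f := by
  rcases exists_eq_natCast_or_exists_neg m with ⟨q, rfl⟩ | ⟨j, hj⟩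
  · rw [intCoeff_natCast, coeff_monomial_mul']
    split_ifs with hpq
    · have hcast : (fun j => ((q - p) j : ℤ)) = fun j => (q j : ℤ) - p j := by
        ext j
        simp [Nat.cast_sub (hpq j)]
      rw [← intCoeff_natCast, hcast]
    · obtain ⟨j, hj⟩ : ∃ j, q j < p j := by simpa [Finsupp.le_def] using hpq
      rw [intCoeff_of_neg (j := j) (by simpa using hj), mul_zero]
  · rw [intCoeff_of_neg hj, intCoeff_of_neg (j := j) (by omega), mul_zero]

lemma intCoeff_mul (m : σ → ℤ) (f g : MvPolynomial σ R) :
    intCoeff m (f * g) = ∑ p ∈ f.support, coeff p f * intCoeff (fun j => m j - p j) g := by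
  conv_lhs => rw [f.as_sum, sum_mul, map_sum]
  simp only [intCoeff_monomial_mul]

lemma intCoeff_ne_zero {m : σ → ℤ} {f : MvPolynomial σ R} (h : intCoeff m f ≠ 0) :
    ∃ p : σ →₀ ℕ, (∀ j, m j = p j) ∧ coeff p f ≠ 0 := by
  rcases exists_eq_natCast_or_exists_neg m with ⟨p, rfl⟩ | ⟨j, hj⟩
  · exact ⟨p, fun _ => rfl, by rwa [intCoeff_natCast] at h⟩
  · exact absurd (intCoeff_of_neg hj f) h

lemma intCoeff_monomial [DecidableEq (σ → ℤ)] (m : σ → ℤ) (p : σ →₀ ℕ) (r : R) :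
    intCoeff m (monomial p r) = if (fun j => (p j : ℤ)) = m then r else 0 := by
  classical
  split_ifs with h
  · rw [← h, intCoeff_natCast, coeff_monomial, if_pos rfl]
  · by_contra hne
    obtain ⟨q, hq, hpq⟩ := intCoeff_ne_zero hne
    have : p = q := by by_contra hne; simp [coeff_monomial, hne] at hpq
    exact h (funext fun j => by rw [hq j, this])

end IntCoeff

section Homogeneous

variable {σ R : Type*} [Fintype σ] [CommSemiring R]

lemma sum_eq_of_coeff_ne_zero {f : MvPolynomial σ R} {d : ℕ} (hf : f.IsHomogeneous d) {p : σ →₀ ℕ}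
    (hp : coeff p f ≠ 0) : ∑ j, p j = d := by
  rw [← hf hp, Finsupp.weight_apply, Finsupp.sum_fintype _ _ (by simp)]
  simp

lemma intCoeff_aeval_cons_one {n d : ℕ} {f : MvPolynomial (Fin (n + 1)) R} (hf : f.IsHomogeneous d)
    {m : Fin (n + 1) → ℤ} (hm : ∑ j, m j = d) :
    intCoeff (Fin.tail m) (aeval (Fin.cons 1 X : Fin (n + 1) → MvPolynomial (Fin n) R) f) =
      intCoeff m f := by
  classical
  conv_lhs => rw [f.as_sum]
  conv_rhs => rw [f.as_sum]
  simp only [map_sum]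
  refine sum_congr rfl fun p hp => ?_
  have dehomogenize : aeval (Fin.cons 1 X : Fin (n + 1) → MvPolynomial (Fin n) R)
      (monomial p (coeff p f)) = monomial p.tail (coeff p f) := by
    rw [aeval_monomial, monomial_eq, Finsupp.prod_fintype _ _ (by simp),
      Finsupp.prod_fintype _ _ (by simp), Fin.prod_univ_succ]
    simp [algebraMap_eq, Finsupp.tail_apply]
  have hsum : (∑ j, p j : ℤ) = ∑ j, m j := by
    rw [hm]
    exact_mod_cast sum_eq_of_coeff_ne_zero hf (mem_support_iff.mp hp)
  rw [dehomogenize, intCoeff_monomial, intCoeff_monomial]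
  congr 1
  simp only [_root_.funext_iff, Fin.tail, Finsupp.tail_apply, Fin.forall_fin_succ, eq_iff_iff]
  refine ⟨fun h => ⟨?_, h⟩, And.right⟩
  simpa [Fin.sum_univ_succ, h] using hsum

end Homogeneous

section Expansion

lemma one_sub_X_pow {σ R : Type*} [CommRing R] (j : σ) (N : ℕ) :
    (1 - X j : MvPolynomial σ R) ^ N =
      ∑ s ∈ range (N + 1), monomial (Finsupp.single j s) ((-1) ^ s * (N.choose s : R)) := by
  rw [sub_eq_neg_add, add_pow]
  refine sum_congr rfl fun s _ => ?_
  rw [neg_pow, one_pow, mul_one, X_pow_eq_monomial, ← mul_one (_ * (N.choose s : R)),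
    ← C_mul_monomial]
  simp [mul_right_comm]

variable {σ R : Type*} [Fintype σ] [CommRing R]

lemma prod_sum_monomial_single [DecidableEq σ] (S : σ → Finset ℕ) (e : σ → ℕ → ℕ) (c : σ → ℕ → R) :
    ∏ j, ∑ s ∈ S j, monomial (Finsupp.single j (e j s)) (c j s) =
      ∑ s ∈ Fintype.piFinset S, monomial (Finsupp.equivFunOnFinite.symm fun j => e j (s j))
        (∏ j, c j (s j)) := by
  rw [prod_univ_sum]
  refine sum_congr rfl fun s _ => ?_
  rw [← monomial_sum_prod]
  congr
  exact Finsupp.univ_sum_single (Finsupp.equivFunOnFinite.symm fun j => e j (s j))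

lemma coeff_prod_one_sub_X_pow (N : σ → ℕ) (m : σ →₀ ℕ) :
    coeff m (∏ j, (1 - X j : MvPolynomial σ R) ^ N j) =
      ∏ j, (-1) ^ m j * ((N j).choose (m j) : R) := by
  classical
  simp only [one_sub_X_pow, prod_sum_monomial_single, coeff_sum, coeff_monomial]
  rw [sum_eq_single (⇑m)]
  · simp
  · intro s _ hs
    exact if_neg fun h => hs (by simp [← h])
  · intro hm
    obtain ⟨j, hj⟩ : ∃ j, N j < m j := by simpa [Nat.lt_succ_iff] using hm
    rw [ite_eq_right_iff]
    exact fun _ => prod_eq_zero (mem_univ j) (by simp [Nat.choose_eq_zero_of_lt hj])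

end Expansion

section DysonProduct

variable {σ R : Type*} [DecidableEq σ] [CommRing R]

/-- The total degree in the variables of `U` on exponents, as a weight. -/
def indicatorWeight (U : Finset σ) (i : σ) : ℕ := if i ∈ U then 1 else 0

lemma weight_indicatorWeight (U : Finset σ) (p : σ →₀ ℕ) :
    Finsupp.weight (indicatorWeight U) p = ∑ i ∈ U, p i := by
  simp only [indicatorWeight, Finsupp.weight_apply, smul_eq_mul, mul_ite, mul_one, mul_zero,
    Finsupp.sum, sum_ite_mem]
  exact sum_subset inter_subset_right fun i hi hip => by simpa [hi] using hip

lemma one_le_weightedOrder_X_sub_X {U : Finset σ} {i j : σ} (hi : i ∈ U) (hj : j ∈ U) :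
    1 ≤ ((X j - X i : MvPolynomial σ R) : MvPowerSeries σ R).weightedOrder (indicatorWeight U) := by
  refine MvPowerSeries.nat_le_weightedOrder (n := 1) _ fun d hd => ?_
  have hzero : ∀ k ∈ U, d k = 0 := by simpa [weight_indicatorWeight] using hd
  rw [coeff_coe, coeff_sub, coeff_X, coeff_X, if_neg, if_neg, sub_zero]
  · rintro rfl
    simpa using hzero i hi
  · rintro rfl
    simpa using hzero j hj

variable [Fintype σ]

/-- Dyson's product `∏_{i ≠ j} (x_j - x_i) ^ a_j`, with cleared denominators: it is
`∏_{i ≠ j} (1 - x_i / x_j) ^ a_j` multiplied by `∏_j x_j ^ ((N - 1) a_j)`, where `N` is the number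
of variables. -/
noncomputable def dysonProduct (a : σ → ℕ) : MvPolynomial σ R :=
  ∏ j, ∏ i ∈ univ.erase j, (X j - X i) ^ a j

lemma isHomogeneous_dysonProduct (a : σ → ℕ) :
    (dysonProduct a : MvPolynomial σ R).IsHomogeneous ((Fintype.card σ - 1) * ∑ j, a j) := by
  have h : (dysonProduct a : MvPolynomial σ R).IsHomogeneous
      (∑ j, ∑ i ∈ univ.erase j, 1 * a j) :=
    IsHomogeneous.prod _ _ _ fun j _ => IsHomogeneous.prod _ _ _ fun i _ =>
      ((isHomogeneous_X R j).sub (isHomogeneous_X R i)).pow (a j)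
  simpa [mul_sum, card_erase_of_mem] using h

lemma sum_of_coeff_dysonProduct_ne_zero {a : σ → ℕ} {p : σ →₀ ℕ}
    (hp : coeff p (dysonProduct a : MvPolynomial σ R) ≠ 0) :
    ∑ j, (p j : ℤ) = (Fintype.card σ - 1) * ∑ j, (a j : ℤ) := by
  have h := sum_eq_of_coeff_ne_zero (isHomogeneous_dysonProduct a) hp
  rcases isEmpty_or_nonempty σ with hσ | hσ
  · simp
  · zify [Fintype.card_pos.nat_succ_le] at h
    exact h

lemma le_weightedOrder_dysonProduct (a : σ → ℕ) (U : Finset σ) :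
    ((#U - 1) * ∑ j ∈ U, a j : ℕ) ≤
      ((dysonProduct a : MvPolynomial σ R) : MvPowerSeries σ R).weightedOrder
        (indicatorWeight U) := by
  let ord (f : MvPowerSeries σ R) := f.weightedOrder (indicatorWeight U)
  let f (j i : σ) : MvPowerSeries σ R := ((X j - X i : MvPolynomial σ R) : MvPowerSeries σ R) ^ a j
  calc (((#U - 1) * ∑ j ∈ U, a j : ℕ) : ℕ∞) = ∑ j ∈ U, ∑ _i ∈ U.erase j, (a j : ℕ∞) := by
        rw [mul_sum, Nat.cast_sum]
        exact sum_congr rfl fun j hj => by simp [card_erase_of_mem hj]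
    _ ≤ ∑ j ∈ U, ∑ i ∈ U.erase j, ord (f j i) := by
        refine sum_le_sum fun j hj => sum_le_sum fun i hi => ?_
        refine le_trans ?_ (MvPowerSeries.le_weightedOrder_pow _ _)
        have h := one_le_weightedOrder_X_sub_X (R := R) (mem_of_mem_erase hi) hj
        simpa using nsmul_le_nsmul_right h (a j)
    _ ≤ ∑ j, ∑ i ∈ univ.erase j, ord (f j i) := by
        refine (sum_le_sum fun j _ => ?_).trans (sum_le_univ_sum_of_nonneg fun _ => zero_le)
        exact sum_le_sum_of_subset (erase_subset_erase j (subset_univ U))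
    _ ≤ ∑ j, ord (∏ i ∈ univ.erase j, f j i) :=
        sum_le_sum fun j _ => MvPowerSeries.le_weightedOrder_prod _ _ _
    _ ≤ ord (∏ j, ∏ i ∈ univ.erase j, f j i) := MvPowerSeries.le_weightedOrder_prod _ _ _
    _ = _ := by
        congr
        simp only [dysonProduct, ← coeToMvPowerSeries.ringHom_apply, map_prod, map_pow, f]

lemma le_sum_of_coeff_dysonProduct_ne_zero {a : σ → ℕ} {p : σ →₀ ℕ}
    (hp : coeff p (dysonProduct a : MvPolynomial σ R) ≠ 0) (U : Finset σ) :
    (#U - 1 : ℤ) * ∑ j ∈ U, (a j : ℤ) ≤ ∑ j ∈ U, (p j : ℤ) := by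
  rw [← coeff_coe] at hp
  have h := (le_weightedOrder_dysonProduct a U).trans (MvPowerSeries.weightedOrder_le _ hp)
  rw [weight_indicatorWeight, Nat.cast_le] at h
  rcases U.eq_empty_or_nonempty with rfl | hU
  · simp
  · zify [hU.card_pos.nat_succ_le] at h
    exact h

lemma sum_lt_of_coeff_dysonProduct_ne_zero {a : σ → ℕ} {p : σ →₀ ℕ}
    (hp : coeff p (dysonProduct a : MvPolynomial σ R) ≠ 0) {h : ℕ} (h_pos : 0 < h) {U : Finset σ}
    (hU : ∀ j ∈ U, a j + p j < h) : ∑ j ∈ U, a j < h := by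
  rcases U.eq_empty_or_nonempty with rfl | hU_nonempty
  · simpa using h_pos
  have hsum : ∑ j ∈ U, ((a j : ℤ) + p j + 1) ≤ ∑ _j ∈ U, (h : ℤ) :=
    sum_le_sum fun j hj => by exact_mod_cast hU j hj
  simp only [sum_add_distrib, sum_const, nsmul_eq_mul, mul_one] at hsum
  have hmul : #U * (∑ j ∈ U, (a j : ℤ) + 1) ≤ #U * h := by
    linarith [le_sum_of_coeff_dysonProduct_ne_zero hp U]
  exact_mod_cast le_of_mul_le_mul_left hmul (by exact_mod_cast hU_nonempty.card_pos)

lemma card_compl_mul_le_of_coeff_dysonProduct_ne_zero {a : σ → ℕ} {p : σ →₀ ℕ}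
    (hp : coeff p (dysonProduct a : MvPolynomial σ R) ≠ 0) {v : σ → ℤ} {h : ℕ} {U : Finset σ}
    (hU : ∀ j ∈ Uᶜ, Fintype.card σ * a j + v j ≤ (a j + p j - h : ℤ)) :
    #Uᶜ * (h - ∑ j ∈ U, (a j : ℤ)) ≤ - ∑ j ∈ Uᶜ, v j := by
  -- The order of vanishing along `{x_j = 0 : j ∈ U}` bounds `∑ j ∈ U, p j` from below, so
  -- homogeneity bounds `∑ j ∈ Uᶜ, p j` from above, while `hU` bounds it from below.
  have hcard : (#U : ℤ) + #Uᶜ = Fintype.card σ := by exact_mod_cast card_add_card_compl U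
  have hsum : ∑ j ∈ Uᶜ, ((Fintype.card σ : ℤ) * a j + v j + h - a j) ≤ ∑ j ∈ Uᶜ, (p j : ℤ) :=
    sum_le_sum fun j hj => by linarith [hU j hj]
  simp only [sum_add_distrib, sum_sub_distrib, sum_const, nsmul_eq_mul, ← mul_sum] at hsum
  have hp_sum := sum_of_coeff_dysonProduct_ne_zero hp
  rw [← sum_add_sum_compl U, ← sum_add_sum_compl U fun j => (a j : ℤ), ← hcard] at hp_sum
  rw [← hcard] at hsum
  linarith [le_sum_of_coeff_dysonProduct_ne_zero hp U]

lemma exists_sum_lt_and_le_of_coeff_dysonProduct_ne_zero {a : σ → ℕ} {p : σ →₀ ℕ}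
    (hp : coeff p (dysonProduct a : MvPolynomial σ R) ≠ 0) {v : σ → ℤ} {h : ℕ} (h_pos : 0 < h)
    (h_le : h ≤ ∑ j, a j)
    (hv : ∀ j, h ≤ a j + p j → Fintype.card σ * a j + v j ≤ (a j + p j - h : ℤ)) :
    ∃ U : Finset σ, ∑ j ∈ U, a j < h ∧ h ≤ ∑ j ∈ U, a j + ∑ j, (v j).natAbs := by
  let U : Finset σ := {j | a j + p j < h}
  have hlt : ∑ j ∈ U, a j < h :=
    sum_lt_of_coeff_dysonProduct_ne_zero hp h_pos fun j hj => (mem_filter.mp hj).2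
  have hmul : #Uᶜ * (h - ∑ j ∈ U, (a j : ℤ)) ≤ - ∑ j ∈ Uᶜ, v j :=
    card_compl_mul_le_of_coeff_dysonProduct_ne_zero hp fun j hj => hv j (by simpa [U] using hj)
  have hUc_nonempty : Uᶜ.Nonempty := by
    rw [nonempty_iff_ne_empty, Ne, compl_eq_empty_iff]
    intro hU_univ
    rw [hU_univ] at hlt
    exact hlt.not_ge h_le
  refine ⟨U, hlt, ?_⟩
  have hv_le : - ∑ j ∈ Uᶜ, v j ≤ ∑ j, |v j| := by
    rw [← sum_neg_distrib]
    exact (sum_le_sum fun j _ => neg_le_abs (v j)).trans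
      (sum_le_univ_sum_of_nonneg fun _ => abs_nonneg _)
  have hcard_pos : (1 : ℤ) ≤ #Uᶜ := by exact_mod_cast hUc_nonempty.card_pos
  zify at hlt ⊢
  nlinarith

end DysonProduct

section ChangeOfVariables

variable {R : Type*} [CommRing R]

lemma aeval_one_sub_X_dysonProduct {σ : Type*} [Fintype σ] [DecidableEq σ] (b : σ → ℕ) :
    aeval (fun j => 1 - X j : σ → MvPolynomial σ R) (dysonProduct b : MvPolynomial σ R) =
      C ((-1) ^ ((Fintype.card σ - 1) * ∑ j, b j)) * dysonProduct b := by
  have hsub (i j : σ) : (1 - X j - (1 - X i) : MvPolynomial σ R) = -1 * (X j - X i) := by ring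
  simp only [dysonProduct, map_prod, map_pow, map_sub, aeval_X, hsub, mul_pow, prod_mul_distrib,
    prod_const, card_erase_of_mem (mem_univ _), card_univ, ← pow_mul, prod_pow_eq_pow_sum,
    ← sum_mul, map_neg, map_one, mul_comm]

lemma dysonProduct_cons {n : ℕ} (t : ℕ) (b : Fin n → ℕ) :
    (dysonProduct (Fin.cons t b) : MvPolynomial (Fin (n + 1)) R) =
      (∏ j, (X 0 - X j.succ) ^ t * (X j.succ - X 0) ^ b j) *
        rename Fin.succ (dysonProduct b) := by
  simp only [dysonProduct, ← filter_ne', prod_filter, Fin.prod_univ_succ, Fin.cons_zero,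
    Fin.cons_succ, ne_eq, not_true, if_false, one_mul, Fin.succ_ne_zero, (Fin.succ_ne_zero _).symm,
    not_false_iff, if_true, Fin.succ_inj, prod_mul_distrib, map_prod, apply_ite, map_pow,
    map_sub, rename_X, map_one]
  ring

lemma aeval_cons_one_dysonProduct {n : ℕ} (t : ℕ) (b : Fin n → ℕ) :
    aeval (Fin.cons 1 X : Fin (n + 1) → MvPolynomial (Fin n) R)
        (dysonProduct (Fin.cons t b) : MvPolynomial (Fin (n + 1)) R) =
      C ((-1) ^ ∑ j, b j) * ((∏ j, (1 - X j) ^ (b j + t)) * dysonProduct b) := by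
  have htail : aeval (Fin.cons 1 X : Fin (n + 1) → MvPolynomial (Fin n) R)
      (rename Fin.succ (dysonProduct b : MvPolynomial (Fin n) R)) = dysonProduct b := by
    rw [aeval_rename]
    exact aeval_X_left_apply _
  have hsign : (∏ j, (X j - 1 : MvPolynomial (Fin n) R) ^ b j) =
      C ((-1) ^ ∑ j, b j) * ∏ j, (1 - X j) ^ b j := by
    simp only [← prod_pow_eq_pow_sum, map_prod, map_pow, map_neg, map_one, ← prod_mul_distrib,
      ← mul_pow, neg_one_mul, neg_sub]
  rw [dysonProduct_cons, map_mul, htail]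
  simp only [map_prod, map_mul, map_pow, map_sub, aeval_X, Fin.cons_zero, Fin.cons_succ,
    prod_mul_distrib, pow_add, hsign]
  ring

end ChangeOfVariables

section BinomialPolynomial

open Polynomial (natDegree)

variable (K : Type*) [Field K]

/-- The polynomial `t ↦ (t + c).choose m`. -/
noncomputable def choosePoly (c m : ℕ) : Polynomial K :=
  Polynomial.C ((m.factorial : K)⁻¹) *
    (descPochhammer K m).comp (Polynomial.X + Polynomial.C (c : K))

lemma natDegree_choosePoly_le (c m : ℕ) : natDegree (choosePoly K c m) ≤ m := by
  refine (Polynomial.natDegree_C_mul_le _ _).trans ?_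
  rw [Polynomial.natDegree_comp, Polynomial.natDegree_X_add_C, mul_one,
    descPochhammer_natDegree]

variable {K} [CharZero K]

lemma eval_choosePoly {c m N : ℕ} {t : K} (h : t + c = N) :
    (choosePoly K c m).eval t = N.choose m := by
  rw [Nat.cast_choose_eq_descPochhammer_div, choosePoly]
  simp [h, div_eq_inv_mul]

variable {σ : Type*} [Fintype σ]

/-! With `∏_j (1 - x_j) ^ (b_j + t)` expanded directly, the degree in `t` is easy to read off; after
the substitution `x_j ↦ 1 - x_j`, the zeros are. -/

lemma exists_polynomial_coeff_prod_one_sub_X_pow_mul {d : ℕ} {g : MvPolynomial σ K}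
    (hg : g.IsHomogeneous d) (b : σ → ℕ) (m : σ →₀ ℕ) :
    ∃ F : Polynomial K, F.natDegree ≤ ∑ j, m j - d ∧
      ∀ t : ℕ, F.eval (t : K) = coeff m ((∏ j, (1 - X j) ^ (b j + t)) * g) := by
  classical
  refine ⟨∑ u ∈ antidiagonal m, Polynomial.C (coeff u.2 g) *
    ∏ j, Polynomial.C ((-1) ^ u.1 j) * choosePoly K (b j) (u.1 j),
    Polynomial.natDegree_sum_le_of_forall_le _ _ fun u hu => ?_, fun t => ?_⟩
  · by_cases hu₂ : coeff u.2 g = 0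
    · simp [hu₂]
    have hsum : ∑ j, m j = ∑ j, u.1 j + d := by
      rw [← sum_eq_of_coeff_ne_zero hg hu₂, ← mem_antidiagonal.mp hu, ← sum_add_distrib]
      rfl
    rw [hsum, Nat.add_sub_cancel]
    refine (Polynomial.natDegree_C_mul_le _ _).trans ((Polynomial.natDegree_prod_le _ _).trans ?_)
    exact sum_le_sum fun j _ =>
      (Polynomial.natDegree_C_mul_le _ _).trans (natDegree_choosePoly_le K _ _)
  · have heval (j : σ) (k : ℕ) : (choosePoly K (b j) k).eval (t : K) = (b j + t).choose k :=
      eval_choosePoly (by push_cast; ring)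
    simp [coeff_mul, coeff_prod_one_sub_X_pow, Polynomial.eval_finsetSum, Polynomial.eval_prod,
      heval, mul_comm (coeff _ g)]

lemma exists_polynomial_coeff_prod_one_sub_X_pow_mul_aeval (g : MvPolynomial σ K) (b : σ → ℕ)
    (m : σ →₀ ℕ) :
    ∃ F : Polynomial K,
      (∀ t : ℕ, F.eval (t : K) =
        coeff m ((∏ j, (1 - X j) ^ (b j + t)) *
          aeval (fun j => 1 - X j : σ → MvPolynomial σ K) g)) ∧
      ∀ h : ℕ, (∀ p ∈ g.support, ∃ j, h ≤ b j + p j ∧ b j + p j < h + m j) →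
        F.eval (-(h : K)) = 0 := by
  refine ⟨∑ p ∈ g.support, Polynomial.C (coeff p g) *
    ∏ j, Polynomial.C ((-1) ^ m j) * choosePoly K (b j + p j) (m j), fun t => ?_, fun h hh => ?_⟩
  · have hexpand : (∏ j, (1 - X j) ^ (b j + t)) *
        aeval (fun j => 1 - X j : σ → MvPolynomial σ K) g =
        ∑ p ∈ g.support, C (coeff p g) * ∏ j, (1 - X j) ^ (b j + p j + t) := by
      rw [aeval_def, eval₂_eq', mul_sum]
      refine sum_congr rfl fun p _ => ?_
      simp only [algebraMap_eq, pow_add, prod_mul_distrib]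
      ring
    have heval (j : σ) (p : σ →₀ ℕ) :
        (choosePoly K (b j + p j) (m j)).eval (t : K) = (b j + p j + t).choose (m j) :=
      eval_choosePoly (by push_cast; ring)
    simp only [hexpand, coeff_sum, coeff_C_mul, coeff_prod_one_sub_X_pow,
      Polynomial.eval_finsetSum, Polynomial.eval_mul, Polynomial.eval_C, Polynomial.eval_prod,
      heval]
  · rw [Polynomial.eval_finsetSum]
    refine sum_eq_zero fun p hp => ?_
    obtain ⟨j, hle, hlt⟩ := hh p hp
    have hzero : (choosePoly K (b j + p j) (m j)).eval (-(h : K)) = 0 := by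
      rw [eval_choosePoly (N := b j + p j - h) (by push_cast [hle]; ring),
        Nat.choose_eq_zero_of_lt (by omega), Nat.cast_zero]
    rw [Polynomial.eval_mul, Polynomial.eval_prod, prod_eq_zero (mem_univ j) (by simp [hzero]),
      mul_zero]

end BinomialPolynomial

section Univariate

open Polynomial (natDegree)

variable {K : Type*} [Field K] [CharZero K]

lemma eq_of_forall_eval_natCast_eq {A : Type*} [CommRing A] [IsDomain A] [CharZero A]
    {F G : Polynomial A}
    (h : ∀ t : ℕ, F.eval (t : A) = G.eval (t : A)) : F = G :=
  Polynomial.eq_of_infinite_eval_eq F G <|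
    (Set.infinite_range_of_injective (Nat.cast_injective (R := A))).mono <| by
      rintro _ ⟨t, rfl⟩
      exact h t

lemma exists_polynomial_mul_choose_eq {A : ℕ} {F : Polynomial K}
    (hF : ∀ h < A, F.eval (-((h + 1 : ℕ) : K)) = 0) :
    ∃ Q : Polynomial K, Q.natDegree ≤ F.natDegree - A ∧
      ∀ t : ℕ, F.eval (t : K) = (t + A).choose t * Q.eval (t : K) := by
  let W : Polynomial K := ∏ h ∈ range A, (Polynomial.X - Polynomial.C (-((h + 1 : ℕ) : K)))
  have hW_monic : W.Monic := Polynomial.monic_prod_X_sub_C _ _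
  have hW_natDegree : W.natDegree = A := by
    rw [Polynomial.natDegree_prod_of_monic _ _ fun h _ => Polynomial.monic_X_sub_C _]
    simp only [Polynomial.natDegree_X_sub_C, sum_const, card_range, smul_eq_mul, mul_one]
  have hW_eval (t : ℕ) : W.eval (t : K) = A.factorial * (t + A).choose t := by
    rw [Nat.choose_symm_add, ← Nat.cast_mul, ← Nat.ascFactorial_eq_factorial_mul_choose,
      Nat.ascFactorial_eq_prod_range, Polynomial.eval_prod, Nat.cast_prod]
    exact prod_congr rfl fun h _ => by simp; ring
  have hinj : Function.Injective fun h : ℕ => -((h + 1 : ℕ) : K) := fun x y hxy => by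
    simpa using hxy
  obtain ⟨Q, rfl⟩ : W ∣ F :=
    prod_dvd_of_coprime ((Polynomial.pairwise_coprime_X_sub_C hinj).set_pairwise _)
      fun h hh => Polynomial.dvd_iff_isRoot.mpr (hF h (mem_range.mp hh))
  refine ⟨Polynomial.C (A.factorial : K) * Q, ?_, fun t => ?_⟩
  · refine (Polynomial.natDegree_C_mul_le _ _).trans ?_
    rcases eq_or_ne Q 0 with rfl | hQ
    · simp
    · rw [hW_monic.natDegree_mul' hQ, hW_natDegree, Nat.add_sub_cancel_left]
  · rw [Polynomial.eval_mul, Polynomial.eval_mul, Polynomial.eval_C, hW_eval]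
    ring

end Univariate

section ExceptionalFactor

variable {σ K : Type*} [Fintype σ] [Field K]

variable (K) in
/-- The polynomial in `t` that vanishes at those `-h` with `∑ j ∈ U, b j < h ≤ ∑ j ∈ U, b j + B` for
some `U`, where the constant term of Dyson's product with first exponent `t` need not vanish. -/
noncomputable def exceptionalFactor (B : ℕ) (b : σ → ℕ) : Polynomial K :=
  ∏ U : Finset σ, ∏ i ∈ range B, (Polynomial.X + Polynomial.C (∑ j ∈ U, (b j : K) + (i + 1)))

lemma natDegree_exceptionalFactor_le (B : ℕ) (b : σ → ℕ) :
    (exceptionalFactor K B b).natDegree ≤ 2 ^ Fintype.card σ * B := by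
  refine (Polynomial.natDegree_prod_le _ _).trans ?_
  refine (sum_le_card_nsmul _ _ B fun U _ => ?_).trans (by simp)
  exact (Polynomial.natDegree_prod_le _ _).trans (by simp [-map_add, -map_sum])

lemma eval_exceptionalFactor (B : ℕ) (b : σ → ℕ) (t : K) :
    (exceptionalFactor K B b).eval t =
      ∏ U : Finset σ, ∏ i ∈ range B, (t + (∑ j ∈ U, (b j : K) + (i + 1))) := by
  simp only [exceptionalFactor, Polynomial.eval_prod, Polynomial.eval_add, Polynomial.eval_X,
    Polynomial.eval_C]

lemma eval_neg_exceptionalFactor {B h : ℕ} {b : σ → ℕ} {U : Finset σ} (hlt : ∑ j ∈ U, b j < h)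
    (hle : h ≤ ∑ j ∈ U, b j + B) : (exceptionalFactor K B b).eval (-(h : K)) = 0 := by
  obtain ⟨i, rfl⟩ := Nat.exists_eq_add_of_lt hlt
  rw [eval_exceptionalFactor]
  exact prod_eq_zero (mem_univ U) (prod_eq_zero (mem_range.mpr (by omega : i < B))
    (by push_cast; ring))

variable [CharZero K]

lemma eval_natCast_exceptionalFactor_ne_zero (B : ℕ) (b : σ → ℕ) (t : ℕ) :
    (exceptionalFactor K B b).eval (t : K) ≠ 0 := by
  rw [eval_exceptionalFactor]
  exact prod_ne_zero_iff.mpr fun U _ => prod_ne_zero_iff.mpr fun i _ => by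
    exact_mod_cast Nat.succ_ne_zero (t + (∑ j ∈ U, b j + i))

lemma eval_exceptionalFactor_mem_rationalFunctions (B k : ℕ) :
    (fun b => (exceptionalFactor K B b).eval (k : K)) ∈ rationalFunctions σ K := by
  have h : (fun b : σ → ℕ => (exceptionalFactor K B b).eval (k : K)) =
      ∏ U : Finset σ, ∏ i ∈ range B, (algebraMap K ((σ → ℕ) → K) (k + (i + 1)) +
        ∑ j ∈ U, fun b => (b j : K)) := by
    ext b
    simp only [eval_exceptionalFactor, prod_apply, Pi.add_apply, Pi.algebraMap_apply,
      Finset.sum_apply, Algebra.algebraMap_self, RingHom.id_apply]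
    exact prod_congr rfl fun U _ => prod_congr rfl fun i _ => by ring
  rw [h]
  exact prod_mem fun U _ => prod_mem fun i _ => add_mem (Subalgebra.algebraMap_mem _ _)
    (sum_mem fun j _ => natCast_mem_rationalFunctions j)

lemma eval_exceptionalFactor_inv_mem_rationalFunctions {n : ℕ} (B : ℕ) :
    (fun a => ((exceptionalFactor K B (Fin.tail a)).eval (a 0 : K))⁻¹) ∈
      rationalFunctions (Fin (n + 1)) K := by
  classical
  have h : (fun a : Fin (n + 1) → ℕ => ((exceptionalFactor K B (Fin.tail a)).eval (a 0 : K))⁻¹) =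
      ∏ U : Finset (Fin n), ∏ i ∈ range B,
        fun a => (∑ j ∈ insert 0 (U.map (Fin.succEmb n)), (a j : K) + (i + 1))⁻¹ := by
    ext a
    simp [eval_exceptionalFactor, prod_apply, Fin.tail, add_assoc]
  rw [h]
  exact prod_mem fun U _ => prod_mem fun i _ => linearForm_inv_mem_rationalFunctions _ _

end ExceptionalFactor

section DysonCoeff

variable {σ : Type*} [Fintype σ] [DecidableEq σ]

/-- The constant term of `∏_j x_j ^ (-v_j) * ∏_{i ≠ j} (1 - x_i / x_j) ^ a_j`. -/
noncomputable def dysonCoeff (R : Type*) [CommRing R] (a : σ → ℕ) (v : σ → ℤ) : R :=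
  intCoeff (fun j => (Fintype.card σ - 1) * a j + v j) (dysonProduct a)

lemma dysonCoeff_eq_zero {R : Type*} [CommRing R] {v : σ → ℤ} (hv : ∑ j, v j ≠ 0) (a : σ → ℕ) :
    dysonCoeff R a v = 0 := by
  by_contra hne
  obtain ⟨p, hmp, hp⟩ := intCoeff_ne_zero hne
  have h := sum_of_coeff_dysonProduct_ne_zero hp
  simp only [← hmp, sum_add_distrib, ← mul_sum] at h
  exact hv (by linarith)

lemma dysonCoeff_cons {R : Type*} [CommRing R] {n : ℕ} {v : Fin (n + 1) → ℤ} (hv : ∑ j, v j = 0)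
    (t : ℕ) (b : Fin n → ℕ) :
    dysonCoeff R (Fin.cons t b : Fin (n + 1) → ℕ) v =
      (-1) ^ (∑ j, b j) * intCoeff (fun j => n * b j + v j.succ)
        ((∏ j, (1 - X j) ^ (b j + t)) * dysonProduct b) := by
  have hdegree : ∑ j : Fin (n + 1), ((Fintype.card (Fin (n + 1)) - 1) *
      ((Fin.cons t b : Fin (n + 1) → ℕ) j : ℤ) + v j) =
        ((Fintype.card (Fin (n + 1)) - 1) * ∑ j, (Fin.cons t b : Fin (n + 1) → ℕ) j : ℕ) := by
    simp only [sum_add_distrib, hv, ← mul_sum, Fintype.card_fin, Nat.add_sub_cancel]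
    push_cast
    ring
  rw [dysonCoeff, ← intCoeff_aeval_cons_one (isHomogeneous_dysonProduct _) hdegree,
    aeval_cons_one_dysonProduct, C_mul', map_smul, smul_eq_mul]
  congr 3
  ext j
  simp [Fin.tail]

section Polynomiality

variable {K : Type*} [Field K] [CharZero K]

lemma exists_polynomial_coeff_prod_one_sub_X_pow_mul_dysonProduct (b : σ → ℕ) (m : σ →₀ ℕ) :
    ∃ F : Polynomial K, F.natDegree ≤ ∑ j, m j - (Fintype.card σ - 1) * ∑ j, b j ∧
      (∀ t : ℕ, F.eval (t : K) = coeff m ((∏ j, (1 - X j) ^ (b j + t)) * dysonProduct b)) ∧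
      ∀ h : ℕ, (∀ p ∈ (dysonProduct b : MvPolynomial σ K).support,
        ∃ j, h ≤ b j + p j ∧ b j + p j < h + m j) → F.eval (-(h : K)) = 0 := by
  obtain ⟨F, hF_natDegree, hF⟩ := exists_polynomial_coeff_prod_one_sub_X_pow_mul
    (isHomogeneous_dysonProduct (R := K) b) b m
  obtain ⟨G, hG, hG_zero⟩ := exists_polynomial_coeff_prod_one_sub_X_pow_mul_aeval
    (dysonProduct (R := K) b) b m
  refine ⟨F, hF_natDegree, hF, fun h hh => ?_⟩
  have hGF : G = Polynomial.C ((-1) ^ ((Fintype.card σ - 1) * ∑ j, b j)) * F :=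
    eq_of_forall_eval_natCast_eq fun t => by
      rw [hG, aeval_one_sub_X_dysonProduct, mul_left_comm, coeff_C_mul, Polynomial.eval_mul,
        Polynomial.eval_C, hF]
  simpa [hGF] using hG_zero h hh

variable {n : ℕ} {v : Fin (n + 1) → ℤ}

lemma exists_polynomial_dysonCoeff_cons (hv : ∑ j, v j = 0) (b : Fin n → ℕ) :
    ∃ F : Polynomial K, F.natDegree ≤ ∑ j, b j + (v 0).natAbs ∧
      (∀ t : ℕ, F.eval (t : K) = dysonCoeff K (Fin.cons t b : Fin (n + 1) → ℕ) v) ∧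
      ∀ h : ℕ, 0 < h → h ≤ ∑ j, b j → F.eval (-(h : K)) ≠ 0 →
        ∃ U : Finset (Fin n), ∑ j ∈ U, b j < h ∧
          h ≤ ∑ j ∈ U, b j + ∑ j : Fin n, (v j.succ).natAbs := by
  rcases exists_eq_natCast_or_exists_neg (fun j : Fin n => n * b j + v j.succ) with
    ⟨m, hm⟩ | ⟨j, hj⟩
  · have hm_apply (j : Fin n) : n * b j + v j.succ = m j := congrFun hm j
    obtain ⟨F, hF_natDegree, hF, hF_zero⟩ :=
      exists_polynomial_coeff_prod_one_sub_X_pow_mul_dysonProduct (K := K) b m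
    refine ⟨Polynomial.C ((-1) ^ ∑ j, b j) * F, ?_, fun t => ?_, fun h h_pos h_le h_ne => ?_⟩
    · refine (Polynomial.natDegree_C_mul_le _ _).trans (hF_natDegree.trans ?_)
      have hm_sum : (n : ℤ) * ∑ j, (b j : ℤ) + ∑ j : Fin n, v j.succ = ∑ j, (m j : ℤ) := by
        simp only [← hm_apply, sum_add_distrib, mul_sum]
      have hn : n * ∑ j, b j ≤ (Fintype.card (Fin n) - 1) * ∑ j, b j + ∑ j, b j := by
        rw [Fintype.card_fin, ← Nat.succ_mul]
        gcongr
        omega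
      rw [Fin.sum_univ_succ] at hv
      zify at hn
      rw [tsub_le_iff_left]
      zify
      have := neg_abs_le (v 0)
      linarith
    · rw [dysonCoeff_cons hv, hm, intCoeff_natCast, Polynomial.eval_mul, Polynomial.eval_C, hF]
    · by_contra hU
      refine h_ne ?_
      rw [Polynomial.eval_mul, hF_zero, mul_zero]
      intro p hp
      by_contra! hlt
      refine hU (exists_sum_lt_and_le_of_coeff_dysonProduct_ne_zero (mem_support_iff.mp hp) h_pos
        h_le fun j hj => ?_)
      have := hlt j hj
      rw [Fintype.card_fin, hm_apply]
      omega
  · refine ⟨0, by simp, fun t => ?_, by simp⟩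
    rw [dysonCoeff_cons hv, intCoeff_of_neg (j := j) hj, mul_zero, Polynomial.eval_zero]

lemma exists_polynomial_exceptionalFactor_mul_dysonCoeff_cons (hv : ∑ j, v j = 0)
    (b : Fin n → ℕ) :
    ∃ Q : Polynomial K, Q.natDegree ≤ 2 ^ n * (∑ j : Fin n, (v j.succ).natAbs) + (v 0).natAbs ∧
      ∀ t : ℕ, (exceptionalFactor K (∑ j : Fin n, (v j.succ).natAbs) b).eval (t : K) *
        dysonCoeff K (Fin.cons t b : Fin (n + 1) → ℕ) v =
          (t + ∑ j, b j).choose t * Q.eval (t : K) := by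
  obtain ⟨F, hF_natDegree, hF, hF_zero⟩ := exists_polynomial_dysonCoeff_cons (K := K) hv b
  let E := exceptionalFactor K (∑ j : Fin n, (v j.succ).natAbs) b
  obtain ⟨Q, hQ_natDegree, hQ⟩ := exists_polynomial_mul_choose_eq
    (A := ∑ j, b j) (F := E * F) fun h hh => by
      rw [Polynomial.eval_mul, mul_eq_zero, or_iff_not_imp_right]
      intro h_ne
      obtain ⟨U, hlt, hle⟩ := hF_zero (h + 1) h.succ_pos hh h_ne
      exact eval_neg_exceptionalFactor hlt hle
  refine ⟨Q, hQ_natDegree.trans ?_, fun t => by rw [← hF, ← hQ, Polynomial.eval_mul]⟩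
  have hE : E.natDegree ≤ 2 ^ n * ∑ j : Fin n, (v j.succ).natAbs := by
    simpa using natDegree_exceptionalFactor_le (K := K) (∑ j : Fin n, (v j.succ).natAbs) b
  have := Polynomial.natDegree_mul_le (p := E) (q := F)
  omega

end Polynomiality

lemma prod_one_sub_X_pow_eq_sum {R : Type*} [CommRing R] (N : σ → ℕ) :
    ∏ j, (1 - X j : MvPolynomial σ R) ^ N j =
      ∑ s ∈ Fintype.piFinset fun j => range (N j + 1),
        monomial (Finsupp.equivFunOnFinite.symm fun j => N j - s j)
          (∏ j, (-1) ^ (N j + s j) * ((N j).choose (s j) : R)) := by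
  have h (j : σ) : (1 - X j : MvPolynomial σ R) ^ N j =
      ∑ s ∈ range (N j + 1),
        monomial (Finsupp.single j (N j - s)) ((-1) ^ (N j + s) * ((N j).choose s : R)) := by
    rw [one_sub_X_pow, ← sum_range_reflect]
    refine sum_congr rfl fun s hs => ?_
    have hs : s ≤ N j := Nat.lt_succ_iff.mp (mem_range.mp hs)
    rw [show N j + 1 - 1 - s = N j - s by omega, Nat.choose_symm hs,
      neg_one_pow_congr (by grind : Even (N j - s) ↔ Even (N j + s))]
  simp only [h, prod_sum_monomial_single]

variable {R : Type*} [CommRing R]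

variable {n : ℕ} {v : Fin (n + 1) → ℤ}

lemma dysonCoeff_cons_eq_sum_range_add (hv : ∑ j, v j = 0) (k : ℕ) (b : Fin n → ℕ) :
    dysonCoeff R (Fin.cons k b : Fin (n + 1) → ℕ) v =
      ∑ s ∈ Fintype.piFinset fun j => range (b j + k + 1),
        (∏ j, (-1) ^ (k + s j) * ((b j + k).choose (s j) : R)) *
          dysonCoeff R b (fun j => v j.succ - k + s j) := by
  rw [dysonCoeff_cons hv, prod_one_sub_X_pow_eq_sum, sum_mul, map_sum, mul_sum]
  refine sum_congr rfl fun s hs => ?_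
  have hs (j : Fin n) : s j ≤ b j + k :=
    Nat.lt_succ_iff.mp (mem_range.mp (Fintype.mem_piFinset.mp hs j))
  have hsign :
      (-1) ^ (∑ j, b j) * ∏ j, (-1) ^ (b j + k + s j) * ((b j + k).choose (s j) : R) =
        ∏ j, (-1) ^ (k + s j) * ((b j + k).choose (s j) : R) := by
    rw [← prod_pow_eq_pow_sum, ← prod_mul_distrib]
    refine prod_congr rfl fun j _ => ?_
    rw [← mul_assoc, ← pow_add,
      neg_one_pow_congr (by grind : Even (b j + _) ↔ Even (k + s j))]
  rw [intCoeff_monomial_mul, ← mul_assoc, hsign, dysonCoeff, Fintype.card_fin]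
  congr 3
  ext j
  simp only [Finsupp.equivFunOnFinite_symm_apply_apply, Nat.cast_sub (hs j)]
  push_cast
  ring

-- By homogeneity only boundedly many `s` contribute, with a bound independent of `b`.
lemma dysonCoeff_cons_eq_sum (hv : ∑ j, v j = 0) (k : ℕ) (b : Fin n → ℕ) :
    dysonCoeff R (Fin.cons k b : Fin (n + 1) → ℕ) v =
      ∑ s ∈ Fintype.piFinset fun _ : Fin n => range (n * k + (v 0).natAbs + 1),
        (∏ j, (-1) ^ (k + s j) * ((b j + k).choose (s j) : R)) *
          dysonCoeff R b (fun j => v j.succ - k + s j) := by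
  rw [dysonCoeff_cons_eq_sum_range_add hv]
  refine sum_congr_of_eq_on_inter (fun s _ hs => ?_) (fun s _ hs => ?_) fun _ _ _ => rfl
  · rw [dysonCoeff_eq_zero, mul_zero]
    contrapose! hs
    have hs_sum : ∑ j, (s j : ℤ) = n * k + v 0 := by
      rw [Fin.sum_univ_succ] at hv
      simp only [sum_add_distrib, sum_sub_distrib, sum_const, card_univ, Fintype.card_fin,
        nsmul_eq_mul] at hs
      linarith
    simp only [Fintype.mem_piFinset, mem_range, Nat.lt_succ_iff]
    intro j
    have := single_le_sum (f := s) (fun _ _ => Nat.zero_le _) (mem_univ j)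
    zify at this ⊢
    have := le_abs_self (v 0)
    linarith
  · obtain ⟨j, hj⟩ : ∃ j, b j + k < s j := by simpa [Nat.lt_succ_iff] using hs
    rw [prod_eq_zero (mem_univ j) (by simp [Nat.choose_eq_zero_of_lt hj]), zero_mul]

end DysonCoeff

section Multinomial

lemma multinomial_cons {n : ℕ} (t : ℕ) (b : Fin n → ℕ) :
    Nat.multinomial univ (Fin.cons t b : Fin (n + 1) → ℕ) =
      (t + ∑ j, b j).choose t * Nat.multinomial univ b := by
  have h := Nat.multinomial_spec univ (Fin.cons t b : Fin (n + 1) → ℕ)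
  simp only [Fin.prod_univ_succ, Fin.sum_univ_succ, Fin.cons_zero, Fin.cons_succ] at h
  rw [← Nat.add_choose_mul_factorial_mul_factorial, ← Nat.choose_symm_add,
    ← Nat.multinomial_spec univ b] at h
  have hpos : 0 < t.factorial * ∏ j, (b j).factorial := by positivity
  exact Nat.eq_of_mul_eq_mul_left hpos (h.trans (by ring))

variable {σ K : Type*} [Field K] [CharZero K]

lemma multinomial_cast_eq (s : Finset σ) (a : σ → ℕ) :
    (Nat.multinomial s a : K) = (∑ i ∈ s, a i).factorial / ∏ i ∈ s, ((a i).factorial : K) := by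
  rw [eq_div_iff (prod_ne_zero_iff.mpr fun i _ => Nat.cast_ne_zero.mpr (a i).factorial_ne_zero),
    ← Nat.multinomial_spec s a]
  push_cast
  ring

lemma multinomial_cast_ne_zero (s : Finset σ) (a : σ → ℕ) : (Nat.multinomial s a : K) ≠ 0 :=
  Nat.cast_ne_zero.mpr (Nat.multinomial_pos _ _).ne'

lemma choose_mem_rationalFunctions (k s : ℕ) (j : σ) :
    (fun b => ((b j + k).choose s : K)) ∈ rationalFunctions σ K := by
  convert polynomial_eval_mem_rationalFunctions (choosePoly K k s) j with b
  exact (eval_choosePoly (by push_cast; rfl)).symm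

lemma choose_sum_inv_mem_rationalFunctions [Fintype σ] (k : ℕ) :
    (fun b => ((k + ∑ j, b j).choose k : K)⁻¹) ∈ rationalFunctions σ K := by
  have h : (fun b : σ → ℕ => ((k + ∑ j, b j).choose k : K)⁻¹) =
      algebraMap K _ (k.factorial : K) *
        ∏ i ∈ range k, fun b => (∑ j, (b j : K) + (i + 1))⁻¹ := by
    ext b
    have hb : ∏ i ∈ range k, (∑ j, (b j : K) + (i + 1)) =
        k.factorial * (k + ∑ j, b j).choose k := by
      rw [add_comm k, ← Nat.cast_mul, ← Nat.ascFactorial_eq_factorial_mul_choose,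
        Nat.ascFactorial_eq_prod_range]
      push_cast
      exact prod_congr rfl fun i _ => by ring
    have hk : (k.factorial : K) ≠ 0 := Nat.cast_ne_zero.mpr k.factorial_ne_zero
    simp only [Pi.mul_apply, prod_apply, prod_inv_distrib, hb, Pi.algebraMap_apply,
      Algebra.algebraMap_self, RingHom.id_apply]
    field
  rw [h]
  exact mul_mem (Subalgebra.algebraMap_mem _ _)
    (prod_mem fun i _ => linearForm_inv_mem_rationalFunctions univ i)

end Multinomial

section DysonRatio

variable {σ K : Type*} [Fintype σ] [DecidableEq σ] [Field K] {n : ℕ}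

variable (K) in
/-- The Laurent coefficient `dysonCoeff K a v` divided by the multinomial coefficient
`(a_0 + ⋯ + a_n)! / (a_0! ⋯ a_n!)`, which is its value at `v = 0` by Dyson's theorem. -/
noncomputable def dysonRatio (v : σ → ℤ) (a : σ → ℕ) : K :=
  dysonCoeff K a v / Nat.multinomial univ a

lemma dysonRatio_cons_eq_sum {v : Fin (n + 1) → ℤ} (hv : ∑ j, v j = 0) (k : ℕ)
    (b : Fin n → ℕ) :
    dysonRatio K v (Fin.cons k b) =
      ((k + ∑ j, b j).choose k : K)⁻¹ *
        ∑ s ∈ Fintype.piFinset fun _ : Fin n => range (n * k + (v 0).natAbs + 1),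
          (∏ j, (-1) ^ (k + s j) * ((b j + k).choose (s j) : K)) *
            dysonRatio K (fun j => v j.succ - k + s j) b := by
  rw [dysonRatio, dysonCoeff_cons_eq_sum hv, multinomial_cons, Nat.cast_mul, div_mul_eq_div_div,
    inv_mul_eq_div, div_right_comm, sum_div]
  simp only [dysonRatio, mul_div_assoc]

variable [CharZero K]

lemma dysonCoeff_eq_dysonRatio_mul (v : σ → ℤ) (a : σ → ℕ) :
    dysonCoeff K a v = dysonRatio K v a * Nat.multinomial univ a :=
  (div_mul_cancel₀ _ (multinomial_cast_ne_zero univ a)).symm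

lemma dysonRatio_cons_mem_rationalFunctions {v : Fin (n + 1) → ℤ} (hv : ∑ j, v j = 0) (k : ℕ)
    (ih : ∀ w : Fin n → ℤ, dysonRatio K w ∈ rationalFunctions (Fin n) K) :
    (fun b => dysonRatio K v (Fin.cons k b)) ∈ rationalFunctions (Fin n) K := by
  have h : (fun b => dysonRatio K v (Fin.cons k b)) =
      (fun b => ((k + ∑ j, b j).choose k : K)⁻¹) *
        ∑ s ∈ Fintype.piFinset fun _ : Fin n => range (n * k + (v 0).natAbs + 1),
          (∏ j, algebraMap K _ ((-1) ^ (k + s j)) * fun b => ((b j + k).choose (s j) : K)) *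
            dysonRatio K (fun j => v j.succ - k + s j) := by
    ext b
    rw [dysonRatio_cons_eq_sum hv]
    simp [prod_apply]
  rw [h]
  exact mul_mem (choose_sum_inv_mem_rationalFunctions k) <| sum_mem fun s _ =>
    mul_mem (prod_mem fun j _ => mul_mem (Subalgebra.algebraMap_mem _ _)
      (choose_mem_rationalFunctions k (s j) j)) (ih _)

lemma exists_polynomial_exceptionalFactor_mul_dysonRatio_cons {v : Fin (n + 1) → ℤ}
    (hv : ∑ j, v j = 0) (b : Fin n → ℕ) :
    ∃ Q : Polynomial K, Q.natDegree ≤ 2 ^ n * (∑ j : Fin n, (v j.succ).natAbs) + (v 0).natAbs ∧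
      ∀ t : ℕ, (exceptionalFactor K (∑ j : Fin n, (v j.succ).natAbs) b).eval (t : K) *
        dysonRatio K v (Fin.cons t b) = Q.eval (t : K) := by
  obtain ⟨Q, hQ_natDegree, hQ⟩ :=
    exists_polynomial_exceptionalFactor_mul_dysonCoeff_cons (K := K) hv b
  refine ⟨Polynomial.C (Nat.multinomial univ b : K)⁻¹ * Q,
    (Polynomial.natDegree_C_mul_le _ _).trans hQ_natDegree, fun t => ?_⟩
  have hchoose : ((t + ∑ j, b j).choose t : K) ≠ 0 :=
    Nat.cast_ne_zero.mpr (Nat.choose_pos (Nat.le_add_right _ _)).ne'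
  rw [dysonRatio, ← mul_div_assoc, hQ, multinomial_cons, Nat.cast_mul, mul_div_mul_left _ _ hchoose,
    Polynomial.eval_mul, Polynomial.eval_C, inv_mul_eq_div]

theorem dysonRatio_mem_rationalFunctions (v : Fin n → ℤ) :
    dysonRatio K v ∈ rationalFunctions (Fin n) K := by
  induction n with
  | zero =>
    convert (rationalFunctions (Fin 0) K).algebraMap_mem (dysonRatio K v 0)
    ext a
    exact congrArg (dysonRatio K v) (Subsingleton.elim a 0)
  | succ n ih =>
    by_cases hv : ∑ j, v j = 0; swap
    · convert zero_mem (rationalFunctions (Fin (n + 1)) K)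
      ext a
      simp [dysonRatio, dysonCoeff_eq_zero hv]
    let B := ∑ j : Fin n, (v j.succ).natAbs
    let E (a : Fin (n + 1) → ℕ) : K := (exceptionalFactor K B (Fin.tail a)).eval (a 0 : K)
    have hE_mul : E * dysonRatio K v ∈ rationalFunctions (Fin (n + 1)) K := by
      refine mem_rationalFunctions_of_slices (M := 2 ^ n * B + (v 0).natAbs) (fun k => ?_)
        fun b => ?_
      · exact mul_mem (eval_exceptionalFactor_mem_rationalFunctions B k)
          (dysonRatio_cons_mem_rationalFunctions hv k ih)
      · obtain ⟨Q, hQ_natDegree, hQ⟩ :=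
          exists_polynomial_exceptionalFactor_mul_dysonRatio_cons (K := K) hv b
        exact ⟨Q, hQ_natDegree, fun t => by simpa [E] using hQ t⟩
    have hE_inv : E⁻¹ ∈ rationalFunctions (Fin (n + 1)) K :=
      eval_exceptionalFactor_inv_mem_rationalFunctions B
    have hE_ne_zero (a) : E a ≠ 0 := eval_natCast_exceptionalFactor_ne_zero B (Fin.tail a) (a 0)
    convert mul_mem hE_inv hE_mul using 1
    ext a
    simp [hE_ne_zero]

end DysonRatio

end Dyson

theorem dyson_rationality_general {K : Type*} [Field K] [CharZero K] (n : ℕ)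
    (P : MvPolynomial (Fin (n + 1)) K) (c : Fin (n + 1) → ℕ) :
    ∃ p, ∃ q ∈ Dyson.linearFormProducts (Fin (n + 1)) K, ∀ a : Fin (n + 1) → ℕ,
      coeff (Finsupp.equivFunOnFinite.symm fun j => n * a j + c j)
          (P * ∏ j : Fin (n + 1), ∏ i ∈ univ.erase j, (X j - X i) ^ a j) =
        eval (fun i => (a i : K)) p / eval (fun i => (a i : K)) q *
          ((∑ i, a i).factorial / ∏ i, ((a i).factorial : K)) := by
  obtain ⟨p, q, hq, hpq⟩ : ∑ u ∈ P.support, coeff u P • Dyson.dysonRatio K (fun j => c j - u j) ∈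
      Dyson.rationalFunctions (Fin (n + 1)) K :=
    sum_mem fun u _ => Subalgebra.smul_mem _ (Dyson.dysonRatio_mem_rationalFunctions _) _
  refine ⟨p, q, hq, fun a => ?_⟩
  rw [← hpq, ← Dyson.multinomial_cast_eq, ← Dyson.intCoeff_natCast, Dyson.intCoeff_mul,
    Finset.sum_apply, sum_mul]
  refine sum_congr rfl fun u _ => ?_
  rw [Pi.smul_apply, smul_eq_mul, mul_assoc, ← Dyson.dysonCoeff_eq_dysonRatio_mul, Dyson.dysonCoeff]
  simp [add_sub_assoc, Dyson.dysonProduct]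

/-- **Rationality of Dyson-type constant terms** (Proposition 2.5).  For any Laurent
polynomial `L(x_0,…,x_n)` independent of the `a_i` (written as `P / ∏_j x_j^(c_j)` with
`P` a polynomial), there is a rational function `R(a_0,…,a_n) = p/q` over `ℚ` such that
for all nonnegative integers `a_0,…,a_n` at which `R` is defined,
`CT_x L · ∏_{0≤i≠j≤n}(1-x_i/x_j)^(a_j) = R(a_0,…,a_n) · (a_0+⋯+a_n)!/(a_0!⋯a_n!)`.
Clearing denominators, the constant term equals the coefficient of
`∏_j x_j^(n·a_j + c_j)` in `P · ∏_{i≠j}(x_j - x_i)^(a_j)`. -/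
theorem dyson_rationality (n : ℕ) (P : MvPolynomial (Fin (n + 1)) ℚ)
    (c : Fin (n + 1) → ℕ) :
    ∃ p q : MvPolynomial (Fin (n + 1)) ℚ, q ≠ 0 ∧
      ∀ a : Fin (n + 1) → ℕ,
        MvPolynomial.eval (fun i => (a i : ℚ)) q ≠ 0 →
        MvPolynomial.coeff (Finsupp.equivFunOnFinite.symm fun j => n * a j + c j)
          (P * ∏ j : Fin (n + 1), ∏ i ∈ Finset.univ.erase j,
            (X j - X i : MvPolynomial (Fin (n + 1)) ℚ) ^ (a j))
        = (MvPolynomial.eval (fun i => (a i : ℚ)) p /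
            MvPolynomial.eval (fun i => (a i : ℚ)) q) *
          (((∑ i, a i).factorial : ℚ) / ∏ i, ((a i).factorial : ℚ)) := by
  obtain ⟨p, q, hq, h⟩ := dyson_rationality_general n P c
  exact ⟨p, q, fun hq₀ => Dyson.eval_natCast_ne_zero hq 0 (by simp [hq₀]), fun a _ => h a⟩
end

section
/- For nonnegative integers $b, k$ and $n\ge 1$, the constant term $\mathrm{CT}_x\,(x_1+\cdots+x_n)^{nb}\prod_{l=1}^n x_l^{-b}\prod_{1\le i\ne j\le n}(1-x_i/x_j)^{k}$ equals $(nb)!\prod_{l=0}^{n-1}\frac{(k(l+1))!}{(b+kl)!\,k!}$. -/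
open MvPolynomial Finset

/-!
A coefficient of top total degree depends only on the leading form, and by Lagrange interpolation it
is a weighted sum of the values on any grid with one more node in each direction than the exponent
there. So every power of a linear form may be replaced by a falling factorial. With suitable shifts
the pair factors force the coordinates of a grid point with nonzero value to be at mutual distance
at least `k`, strictly more if they are out of order, and the factor of `∑ x_l` forces their sum to
be at least `∑ (k i + b)`. The grid `{0, …, (n - 1) k + b} ^ n` has room for only one such point,
`x_i = k i + b`, so the coefficient is a single value times a single weight, both products of
factorials.
-/

section LeadingForm

variable {σ R : Type*}

/-- `P` has total degree at most `m`, and `Q` is its homogeneous component of degree `m`. -/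
def HasLeadingForm [CommSemiring R] (m : ℕ) (P Q : MvPolynomial σ R) : Prop :=
  P.totalDegree ≤ m ∧ homogeneousComponent m P = Q

namespace HasLeadingForm

section CommSemiring

variable [CommSemiring R] {m₁ m₂ m : ℕ} {P₁ P₂ Q₁ Q₂ P Q : MvPolynomial σ R}

lemma coeff_eq (h : HasLeadingForm m P Q) {e : σ →₀ ℕ} (he : e.degree = m) :
    coeff e P = coeff e Q := by
  rw [← h.2, coeff_homogeneousComponent, if_pos he]

lemma of_isHomogeneous (h : P.IsHomogeneous m) : HasLeadingForm m P P :=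
  ⟨h.totalDegree_le, homogeneousComponent_eq_self h⟩

lemma mul (h₁ : HasLeadingForm m₁ P₁ Q₁) (h₂ : HasLeadingForm m₂ P₂ Q₂) :
    HasLeadingForm (m₁ + m₂) (P₁ * P₂) (Q₁ * Q₂) := by
  classical
  obtain ⟨hdeg₁, rfl⟩ := h₁
  obtain ⟨hdeg₂, rfl⟩ := h₂
  refine ⟨(totalDegree_mul P₁ P₂).trans (add_le_add hdeg₁ hdeg₂), ?_⟩
  ext e
  rw [coeff_homogeneousComponent]
  split_ifs with he
  · rw [coeff_mul, coeff_mul]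
    refine sum_congr rfl fun x hx => ?_
    have hx_deg : x.1.degree + x.2.degree = m₁ + m₂ := by
      rw [← map_add, mem_antidiagonal.1 hx, he]
    rcases lt_trichotomy x.1.degree m₁ with h | h | h
    · rw [coeff_eq_zero_of_totalDegree_lt (f := P₂) (d := x.2), coeff_homogeneousComponent,
        if_neg h.ne, mul_zero, zero_mul]
      rw [← Finsupp.degree_apply]
      omega
    · rw [coeff_homogeneousComponent, coeff_homogeneousComponent, if_pos h, if_pos (by omega)]
    · rw [coeff_eq_zero_of_totalDegree_lt (f := P₁) (d := x.1), coeff_homogeneousComponent,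
        if_neg h.ne', zero_mul, zero_mul]
      rw [← Finsupp.degree_apply]
      omega
  · exact (((homogeneousComponent_isHomogeneous m₁ P₁).mul
      (homogeneousComponent_isHomogeneous m₂ P₂)).coeff_eq_zero he).symm

lemma prod {ι : Type*} (s : Finset ι) {m : ι → ℕ} {P Q : ι → MvPolynomial σ R}
    (h : ∀ i ∈ s, HasLeadingForm (m i) (P i) (Q i)) :
    HasLeadingForm (∑ i ∈ s, m i) (∏ i ∈ s, P i) (∏ i ∈ s, Q i) := by
  induction s using Finset.cons_induction with
  | empty => exact of_isHomogeneous (isHomogeneous_one σ R)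
  | cons i s hi ih =>
    rw [sum_cons, prod_cons, prod_cons]
    exact (h i (mem_cons_self i s)).mul (ih fun j hj => h j (mem_cons_of_mem hj))

end CommSemiring

section CommRing

variable [CommRing R] {P Q : MvPolynomial σ R}

lemma sub_C {m : ℕ} (h : HasLeadingForm (m + 1) P Q) (a : R) :
    HasLeadingForm (m + 1) (P - C a) Q := by
  refine ⟨(totalDegree_sub_C_le P a).trans h.1, ?_⟩
  rw [map_sub, h.2, homogeneousComponent_eq_zero (m + 1) (C a) (by simp), sub_zero]

lemma aeval_descPochhammer (h : HasLeadingForm 1 P Q) (m : ℕ) :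
    HasLeadingForm m (Polynomial.aeval P (descPochhammer R m)) (Q ^ m) := by
  induction m with
  | zero => simpa using of_isHomogeneous (isHomogeneous_one σ R)
  | succ m ih =>
    have hfactor : Polynomial.aeval P (descPochhammer R (m + 1)) =
        Polynomial.aeval P (descPochhammer R m) * (P - C (m : R)) := by
      simp [descPochhammer_succ_right]
    rw [hfactor, pow_succ]
    exact ih.mul (h.sub_C _)

end CommRing

end HasLeadingForm

end LeadingForm

section Interpolation

variable {σ ι K : Type*} [Fintype σ] [DecidableEq σ] [DecidableEq ι] [Field K]

lemma sum_pow_mul_nodalWeight {s : Finset ι} {v : ι → K} (hv : Set.InjOn v s) {m e : ℕ}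
    (hs : #s = m + 1) (he : e ≤ m) :
    ∑ i ∈ s, v i ^ e * Lagrange.nodalWeight s v i = if e = m then 1 else 0 := by
  have hdeg : (Polynomial.X ^ e : Polynomial K).degree < #s := by
    rw [Polynomial.degree_X_pow, hs]
    exact_mod_cast Nat.lt_succ_of_le he
  simpa [hs, Polynomial.coeff_X_pow, Lagrange.nodalWeight, div_eq_mul_inv, eq_comm] using
    (Lagrange.coeff_eq_sum hv hdeg).symm

theorem coeff_eq_sum_eval_mul_nodalWeight {s : σ → Finset ι} {v : σ → ι → K}
    (hv : ∀ i, Set.InjOn (v i) (s i)) {d : σ →₀ ℕ} (hs : ∀ i, #(s i) = d i + 1)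
    {P : MvPolynomial σ K} (hP : P.totalDegree ≤ d.degree) :
    coeff d P = ∑ c ∈ Fintype.piFinset s,
      eval (fun i => v i (c i)) P * ∏ i, Lagrange.nodalWeight (s i) (v i) (c i) := by
  have hmonomial : ∀ e ∈ P.support,
      ∏ i, ∑ t ∈ s i, v i t ^ e i * Lagrange.nodalWeight (s i) (v i) t =
        if e = d then 1 else 0 := by
    intro e he
    split_ifs with hed
    · subst hed
      exact prod_eq_one fun i _ => by rw [sum_pow_mul_nodalWeight (hv i) (hs i) le_rfl, if_pos rfl]
    · obtain ⟨i, hi⟩ : ∃ i, e i < d i := by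
        by_contra! hle
        have hdeg : e.degree ≤ d.degree := (le_totalDegree he).trans hP
        rw [Finsupp.degree_eq_sum, Finsupp.degree_eq_sum] at hdeg
        have heq := (sum_eq_sum_iff_of_le fun i _ => hle i).1
          (le_antisymm (sum_le_sum fun i _ => hle i) hdeg)
        exact hed (Finsupp.ext fun i => (heq i (mem_univ i)).symm)
      exact prod_eq_zero (mem_univ i) (by
        rw [sum_pow_mul_nodalWeight (hv i) (hs i) hi.le, if_neg hi.ne])
  calc coeff d P
      = ∑ e ∈ P.support, coeff e P * if e = d then 1 else 0 := by
        simp +contextual [eq_comm]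
    _ = ∑ e ∈ P.support, coeff e P * ∑ c ∈ Fintype.piFinset s,
          ∏ i, (v i (c i) ^ e i * Lagrange.nodalWeight (s i) (v i) (c i)) :=
        sum_congr rfl fun e he => by rw [← hmonomial e he, prod_univ_sum]
    _ = _ := by
        simp only [mul_sum, eval_eq', sum_mul]
        rw [sum_comm]
        simp only [prod_mul_distrib, mul_assoc]

lemma nodalWeight_range_natCast (t r : ℕ) :
    Lagrange.nodalWeight (range (t + r + 1)) (Nat.cast : ℕ → K) t =
      (-1) ^ r / (t.factorial * r.factorial) := by
  induction r with
  | zero =>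
    have hfact : ∏ u ∈ range t, ((t : K) - u) = t.factorial := by
      rw [← descPochhammer_eval_eq_prod_range, descPochhammer_eval_eq_descFactorial,
        Nat.descFactorial_self]
    simp [Lagrange.nodalWeight, range_add_one, prod_inv_distrib, hfact]
  | succ r ih =>
    rw [Lagrange.nodalWeight] at ih ⊢
    have hgap : (t : K) - (t + r + 1 : ℕ) = -(r + 1 : ℕ) := by push_cast; ring
    rw [← add_assoc, range_add_one (n := t + r + 1), erase_insert_of_ne (by omega),
      prod_insert (by simp), ih, hgap, Nat.factorial_succ, pow_succ,
      Nat.cast_mul, inv_neg]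
    simp only [div_eq_mul_inv, mul_inv]
    ring

end Interpolation

section Separated

variable {n k b : ℕ} {c : Fin n → ℕ}

lemma add_mul_sub_le (h : ∀ i j, i < j → c i + k ≤ c j) {i j : Fin n} (hij : i ≤ j) :
    c i + k * (j - i) ≤ c j := by
  obtain ⟨j, hj⟩ := j
  obtain ⟨r, rfl⟩ : ∃ r, j = i + r := Nat.exists_eq_add_of_le hij
  induction r with
  | zero => simp
  | succ r ih =>
    have hr : c ⟨i + r, by omega⟩ + k ≤ c ⟨i + (r + 1), hj⟩ := h _ _ (by simp [Fin.lt_def])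
    have := ih (by omega) (by simp [Fin.le_def])
    simp only [Nat.add_sub_cancel_left, mul_add] at this ⊢
    omega

lemma exists_perm_add_mul_sub_le (h : ∀ i j, i ≠ j → c i + k ≤ c j ∨ c j + k ≤ c i) :
    ∃ τ : Equiv.Perm (Fin n), ∀ i j, i ≤ j → c (τ i) + k * (j - i) ≤ c (τ j) := by
  refine ⟨Tuple.sort c, fun i j => add_mul_sub_le (c := c ∘ Tuple.sort c) fun i j hij => ?_⟩
  have hle : c (Tuple.sort c i) ≤ c (Tuple.sort c j) := Tuple.monotone_sort c hij.le
  have := h _ _ ((Tuple.sort c).injective.ne hij.ne)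
  simp only [Function.comp_apply]
  omega

/-- A configuration with `c j - c i ∉ [-k, k)` for all `i < j`: a grid point at which no factor of
`shiftedMorris` attached to a pair of variables vanishes. The asymmetry between the two alternatives
is what singles out one ordering of the values. -/
def IsSeparated (k : ℕ) (c : Fin n → ℕ) : Prop :=
  ∀ i j, i < j → c i + k ≤ c j ∨ c j + k < c i

lemma IsSeparated.sum_mul_le_sum (h : IsSeparated k c) : ∑ i : Fin n, k * i ≤ ∑ i, c i := by
  have hsymm : ∀ i j, i ≠ j → c i + k ≤ c j ∨ c j + k ≤ c i := fun i j hij => by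
    rcases hij.lt_or_gt with hij | hij
    · exact (h i j hij).imp_right le_of_lt
    · exact (h j i hij).symm.imp_left le_of_lt
  obtain ⟨τ, hτ⟩ := exists_perm_add_mul_sub_le hsymm
  rw [← Equiv.sum_comp τ c]
  refine sum_le_sum fun i _ => ?_
  have := hτ ⟨0, i.pos⟩ i (Nat.zero_le i)
  simp only [Nat.sub_zero] at this
  omega

/- Breaking ties by position turns `c` into `e i = n * c i + i`, whose values are pairwise at
distance at least `n * k + 1`; equality in the resulting bound determines `e`, hence `c`. -/
lemma IsSeparated.eq_of_sum_le (h : IsSeparated k c) (hc : ∀ i, c i ≤ (n - 1) * k + b)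
    (hsum : ∑ i : Fin n, (k * i + b) ≤ ∑ i, c i) : c = fun i : Fin n => k * i + b := by
  set e : Fin n → ℕ := fun i => n * c i + i with he
  have hlt : ∀ i j, i < j → e i + (n * k + 1) ≤ e j ∨ e j + (n * k + 1) ≤ e i := by
    intro i j hij
    rcases h i j hij with hle | hlt
    · have := Nat.mul_le_mul_left n hle
      simp only [mul_add, he] at this ⊢
      omega
    · have := Nat.mul_le_mul_left n (Nat.succ_le_of_lt hlt)
      simp only [Nat.succ_eq_add_one, mul_add, mul_one, he] at this ⊢
      omega
  have hsymm : ∀ i j, i ≠ j → e i + (n * k + 1) ≤ e j ∨ e j + (n * k + 1) ≤ e i := fun i j hij =>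
    hij.lt_or_gt.elim (hlt i j) fun hji => (hlt j i hji).symm
  obtain ⟨τ, hτ⟩ := exists_perm_add_mul_sub_le hsymm
  have hupper : ∀ i, e (τ i) ≤ n * (k * i + b) + i := by
    intro i
    obtain ⟨r, hr⟩ : ∃ r, n = i + r + 1 := ⟨n - 1 - i, by omega⟩
    have hlast := hτ i ⟨n - 1, by omega⟩ (Nat.le_sub_one_of_lt i.2)
    have hmax := Nat.mul_le_mul_left n (hc (τ ⟨n - 1, by omega⟩))
    have hpos := (τ ⟨n - 1, by omega⟩).2
    have hsub : n - 1 = i + r := by omega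
    simp only [he, hsub, Nat.add_sub_cancel_left] at hlast hmax hpos ⊢
    nlinarith
  have hsum_e : ∑ i : Fin n, (n * (k * i + b) + (i : ℕ)) ≤ ∑ i, e (τ i) := by
    rw [Equiv.sum_comp τ e, sum_add_distrib, sum_add_distrib, ← mul_sum, ← mul_sum]
    gcongr
  have heq : ∀ i, e (τ i) = n * (k * i + b) + i := fun i =>
    (sum_eq_sum_iff_of_le fun i _ => hupper i).1
      (le_antisymm (sum_le_sum fun i _ => hupper i) hsum_e) i (mem_univ i)
  have hτ_id : ∀ i, τ i = i := fun i => Fin.ext <| by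
    simpa [he, Nat.mul_add_mod, Nat.mod_eq_of_lt] using congrArg (· % n) (heq i)
  funext i
  have := heq i
  rw [hτ_id] at this
  exact Nat.eq_of_mul_eq_mul_left i.pos (Nat.add_right_cancel this)

end Separated

section MorrisPolynomial

variable (R : Type*) [CommRing R] (n b k : ℕ)

/-- An inhomogeneous polynomial whose leading form is
`(∑ l, x l) ^ (n * b) * ∏ i ≠ j, (x j - x i) ^ k`: powers of linear forms become falling factorials,
each pair `j < i` contributing one that replaces `(x i - x j) ^ (2 * k)`. The shifts by
`∑ i, k * i` and `-k` are chosen so that on the grid `{0, …, (n - 1) * k + b} ^ n` it vanishes away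
from the point `i ↦ k * i + b`. -/
noncomputable def shiftedMorris : MvPolynomial (Fin n) R :=
  Polynomial.aeval (∑ l, X l - C ((∑ i : Fin n, k * i : ℕ) : R)) (descPochhammer R (n * b)) *
    ∏ j : Fin n, ∏ i ∈ Ioi j,
      (C ((-1) ^ k) * Polynomial.aeval (X i - X j - C (-k : R)) (descPochhammer R (2 * k)))

lemma prod_prod_erase_sub_pow {S ι : Type*} [CommRing S] [Fintype ι] [LinearOrder ι]
    [LocallyFiniteOrderTop ι] [LocallyFiniteOrderBot ι] (x : ι → S) :
    ∏ j, ∏ i ∈ univ.erase j, (x j - x i) ^ k =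
      ∏ j, ∏ i ∈ Ioi j, ((-1) ^ k * (x i - x j) ^ (2 * k)) := by
  have hpair (i j : ι) : (-1) ^ k * (x i - x j) ^ (2 * k) = (x j - x i) ^ k * (x i - x j) ^ k := by
    rw [two_mul, pow_add, ← mul_assoc, ← mul_pow, neg_one_mul, neg_sub]
  simp only [hpair, prod_prod_Ioi_mul_eq_prod_prod_off_diag fun i j => (x j - x i) ^ k,
    compl_singleton]

lemma hasLeadingForm_shiftedMorris :
    HasLeadingForm (n * ((n - 1) * k + b)) (shiftedMorris R n b k)
      ((∑ l, X l) ^ (n * b) * ∏ j : Fin n, ∏ i ∈ univ.erase j, (X j - X i) ^ k) := by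
  have hdegree : n * ((n - 1) * k + b) =
      n * b + ∑ j : Fin n, ∑ _i ∈ Ioi j, (0 + 2 * k) := by
    have hcount : ∑ j : Fin n, (n - 1 - j) = ∑ j ∈ range n, j := by
      rw [Fin.sum_univ_eq_sum_range fun j => n - 1 - j, sum_range_reflect fun j => j]
    simp only [sum_const, Fin.card_Ioi, smul_eq_mul, ← sum_mul, hcount]
    rw [zero_add, ← mul_assoc, sum_range_id_mul_two]
    ring
  rw [hdegree, prod_prod_erase_sub_pow]
  refine .mul (.aeval_descPochhammer (.sub_C (.of_isHomogeneous ?_) _) _)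
    (.prod _ fun j _ => .prod _ fun i _ => .mul ?_ (.aeval_descPochhammer (.sub_C ?_ _) _))
  · exact IsHomogeneous.sum _ _ _ fun l _ => isHomogeneous_X R l
  · simpa using HasLeadingForm.of_isHomogeneous (isHomogeneous_C (Fin n) ((-1 : R) ^ k))
  · exact .of_isHomogeneous ((isHomogeneous_X R i).sub (isHomogeneous_X R j))

variable {R n b k}

lemma eval_shiftedMorris (x : Fin n → R) :
    eval x (shiftedMorris R n b k) =
      (descPochhammer R (n * b)).eval (∑ l, x l - (∑ i : Fin n, k * i : ℕ)) *
        ∏ j, ∏ i ∈ Ioi j, ((-1) ^ k * (descPochhammer R (2 * k)).eval (x i - x j + k)) := by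
  have heval (P : MvPolynomial (Fin n) R) (p : Polynomial R) :
      eval x (Polynomial.aeval P p) = p.eval (eval x P) := by
    rw [← coe_aeval_eq_eval, RingHom.coe_coe, ← Polynomial.aeval_algHom_apply,
      Polynomial.coe_aeval_eq_eval]
  simp [shiftedMorris, heval]

lemma isSeparated_of_eval_shiftedMorris_ne_zero {c : Fin n → ℕ}
    (h : eval (fun i => (c i : R)) (shiftedMorris R n b k) ≠ 0) : IsSeparated k c := by
  intro j i hji
  rw [eval_shiftedMorris] at h
  by_contra! hclose
  have harg : (c i : R) - c j + k = (c i + k - c j : ℕ) := by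
    rw [Nat.cast_sub hclose.2]
    push_cast
    ring
  refine right_ne_zero_of_mul h (prod_eq_zero (mem_univ j) (prod_eq_zero (mem_Ioi.2 hji) ?_))
  rw [harg, descPochhammer_eval_coe_nat_of_lt (by omega), mul_zero]

lemma eq_of_eval_shiftedMorris_ne_zero {c : Fin n → ℕ} (hc : ∀ i, c i ≤ (n - 1) * k + b)
    (h : eval (fun i => (c i : R)) (shiftedMorris R n b k) ≠ 0) :
    c = fun i : Fin n => k * i + b := by
  have hsep := isSeparated_of_eval_shiftedMorris_ne_zero h
  refine hsep.eq_of_sum_le hc ?_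
  rw [eval_shiftedMorris, ← Nat.cast_sum, ← Nat.cast_sub hsep.sum_mul_le_sum] at h
  have hge : n * b ≤ ∑ i, c i - ∑ i : Fin n, k * i := by
    by_contra! hlt
    exact left_ne_zero_of_mul h (descPochhammer_eval_coe_nat_of_lt hlt)
  have := hsep.sum_mul_le_sum
  simp only [sum_add_distrib, sum_const, card_univ, Fintype.card_fin, smul_eq_mul]
  omega

lemma prod_descFactorial_mul_factorial (k m : ℕ) :
    (∏ r ∈ range m, (k * (r + 2)).descFactorial (2 * k)) * k.factorial =
      (k * (m + 1)).factorial * (k * m).factorial := by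
  induction m with
  | zero => simp
  | succ m ih =>
    have hstep : (k * m).factorial * (k * (m + 2)).descFactorial (2 * k) =
        (k * (m + 2)).factorial := by
      rw [← Nat.factorial_mul_descFactorial (n := k * (m + 2)) (k := 2 * k) (by nlinarith)]
      congr 2
      rw [mul_add]
      omega
    rw [prod_range_succ, mul_right_comm, ih, ← hstep]
    ring

lemma prod_Ioi_fin_sub {M : Type*} [CommMonoid M] (j : Fin n) (f : ℕ → M) :
    ∏ i ∈ Ioi j, f (i - j) = ∏ r ∈ range (n - 1 - j), f (r + 1) := by
  have hIco : (Ioi j).map Fin.valEmbedding = Ico (j + 1 : ℕ) n := by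
    ext i
    simp
  calc ∏ i ∈ Ioi j, f (i - j)
      = ∏ i ∈ Ico (j + 1 : ℕ) n, f (i - j) := by rw [← hIco, prod_map]; rfl
    _ = ∏ r ∈ range (n - 1 - j), f (r + 1) := by
        rw [prod_Ico_eq_prod_range, Nat.sub_sub, add_comm 1]
        exact prod_congr rfl fun r _ => by congr 1; omega

variable {K : Type*} [Field K]

lemma eval_shiftedMorris_mul_add [CharZero K] :
    eval (fun i : Fin n => ((k * i + b : ℕ) : K)) (shiftedMorris K n b k) =
      (n * b).factorial * ∏ j : Fin n, ((-1 : K) ^ (k * (n - 1 - j)) *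
        ((k * (n - 1 - j + 1)).factorial * (k * (n - 1 - j)).factorial / k.factorial)) := by
  have hsum : (∑ i : Fin n, ((k * i + b : ℕ) : K)) - (∑ i : Fin n, k * i : ℕ) = (n * b : ℕ) := by
    simp [sum_add_distrib]
  rw [eval_shiftedMorris, hsum, descPochhammer_eval_eq_descFactorial, Nat.descFactorial_self]
  congr 1
  refine prod_congr rfl fun j _ => ?_
  have hdiff : ∀ i ∈ Ioi j, ((k * i + b : ℕ) : K) - (k * j + b : ℕ) + k =
      (k * (i - j + 1) : ℕ) := fun i hi => by
    have hle : (j : ℕ) ≤ i := (mem_Ioi.1 hi).le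
    push_cast [hle]
    ring
  have hrow : ∏ i ∈ Ioi j, (descPochhammer K (2 * k)).eval
        (((k * i + b : ℕ) : K) - (k * j + b : ℕ) + k) =
      (k * (n - 1 - j + 1)).factorial * (k * (n - 1 - j)).factorial / k.factorial := by
    rw [eq_div_iff (Nat.cast_ne_zero.2 k.factorial_ne_zero)]
    calc _ = (∏ i ∈ Ioi j, ((k * (i - j + 1)).descFactorial (2 * k) : K)) * k.factorial := by
          congr 1
          exact prod_congr rfl fun i hi => by
            rw [hdiff i hi, descPochhammer_eval_eq_descFactorial]
      _ = _ := by
          rw [prod_Ioi_fin_sub j fun r => ((k * (r + 1)).descFactorial (2 * k) : K)]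
          exact_mod_cast prod_descFactorial_mul_factorial k (n - 1 - j)
  rw [prod_mul_distrib, prod_const, Fin.card_Ioi, ← pow_mul, hrow]

lemma nodalWeight_range_mul_add (i : Fin n) :
    Lagrange.nodalWeight (range ((n - 1) * k + b + 1)) (Nat.cast : ℕ → K) (k * i + b) =
      (-1) ^ (k * (n - 1 - i)) / ((k * i + b).factorial * (k * (n - 1 - i)).factorial) := by
  have hsplit : (n - 1) * k + b = k * i + b + k * (n - 1 - i) := by
    rw [add_right_comm, ← mul_add, Nat.add_sub_of_le (Nat.le_sub_one_of_lt i.2), mul_comm]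
  rw [hsplit, nodalWeight_range_natCast]

lemma eval_shiftedMorris_mul_prod_nodalWeight [CharZero K] :
    eval (fun i : Fin n => ((k * i + b : ℕ) : K)) (shiftedMorris K n b k) *
        ∏ i : Fin n, Lagrange.nodalWeight (range ((n - 1) * k + b + 1)) Nat.cast (k * i + b) =
      (n * b).factorial * ∏ l ∈ range n,
        ((k * (l + 1)).factorial : K) / ((b + k * l).factorial * k.factorial) := by
  have hfact (m : ℕ) : (m.factorial : K) ≠ 0 := Nat.cast_ne_zero.2 m.factorial_ne_zero
  have hrow (i : Fin n) :
      (-1) ^ (k * (n - 1 - i)) *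
          ((k * (n - 1 - i + 1)).factorial * (k * (n - 1 - i)).factorial / k.factorial) *
        Lagrange.nodalWeight (range ((n - 1) * k + b + 1)) Nat.cast (k * i + b) =
      ((k * (n - 1 - i + 1)).factorial : K) / ((b + k * i).factorial * k.factorial) := by
    have hsign : ((-1 : K) ^ (k * (n - 1 - i))) ^ 2 = 1 := by
      rw [← pow_mul, mul_comm, pow_mul, neg_one_sq, one_pow]
    rw [nodalWeight_range_mul_add, add_comm b]
    field_simp [hfact]
    rw [hsign]
  rw [eval_shiftedMorris_mul_add, mul_assoc, ← prod_mul_distrib]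
  simp only [hrow]
  rw [Fin.prod_univ_eq_prod_range
      fun i => ((k * (n - 1 - i + 1)).factorial : K) / ((b + k * i).factorial * k.factorial),
    prod_div_distrib, prod_div_distrib, prod_range_reflect fun l => ((k * (l + 1)).factorial : K)]

end MorrisPolynomial

theorem morris_leading_coefficient_general {K : Type*} [Field K] [CharZero K] (n b k : ℕ) :
    coeff (Finsupp.equivFunOnFinite.symm fun _ : Fin n => (n - 1) * k + b)
      ((∑ l : Fin n, X l) ^ (n * b) *
        ∏ j : Fin n, ∏ i ∈ univ.erase j, (X j - X i : MvPolynomial (Fin n) K) ^ k) =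
      ((n * b).factorial : K) * ∏ l ∈ range n,
        ((k * (l + 1)).factorial : K) / ((b + k * l).factorial * k.factorial) := by
  set d := Finsupp.equivFunOnFinite.symm fun _ : Fin n => (n - 1) * k + b
  have hlead := hasLeadingForm_shiftedMorris K n b k
  have hdeg : d.degree = n * ((n - 1) * k + b) := by simp [d, Finsupp.degree_eq_sum]
  rw [← hlead.coeff_eq hdeg, coeff_eq_sum_eval_mul_nodalWeight
      (s := fun _ => range ((n - 1) * k + b + 1)) (v := fun _ => Nat.cast)
      (fun _ => Nat.cast_injective.injOn) (fun _ => card_range _) (hlead.1.trans_eq hdeg.symm),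
    sum_eq_single_of_mem fun i : Fin n => k * i + b]
  · exact eval_shiftedMorris_mul_prod_nodalWeight
  · refine Fintype.mem_piFinset.2 fun i => mem_range_succ_iff.2 ?_
    rw [mul_comm k]
    gcongr
    exact Nat.le_sub_one_of_lt i.2
  · intro c hc hne
    refine mul_eq_zero_of_left (not_not.1 fun h => hne ?_) _
    exact eq_of_eval_shiftedMorris_ne_zero
      (fun i => mem_range_succ_iff.1 (Fintype.mem_piFinset.1 hc i)) h

/-- **Leading coefficient identity for the Morris constant term** (Corollary 6.4).
`CT_x (x_1+⋯+x_n)^(nb) ∏_l x_l^(-b) ∏_{1≤i≠j≤n}(1-x_i/x_j)^k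
  = (nb)! ∏_{l=0}^{n-1} (k(l+1))!/((b+kl)! k!)`.
Clearing denominators, the constant term equals the coefficient of
`∏_l x_l^((n-1)k + b)` in `(x_1+⋯+x_n)^(nb) · ∏_{i≠j}(x_j-x_i)^k`. -/
theorem morris_leading_coefficient (n b k : ℕ) (hn : 1 ≤ n) :
    MvPolynomial.coeff
      (Finsupp.equivFunOnFinite.symm (fun _ : Fin n => (n - 1) * k + b))
      ((∑ l : Fin n, X l) ^ (n * b) *
        ∏ j : Fin n, ∏ i ∈ Finset.univ.erase j,
          (X j - X i : MvPolynomial (Fin n) ℚ) ^ k)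
      = ((n * b).factorial : ℚ) *
          ∏ l ∈ Finset.range n,
            ((k * (l + 1)).factorial : ℚ) / ((b + k * l).factorial * k.factorial) := by
  exact morris_leading_coefficient_general n b k
end
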